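/- arXiv:1708.00832 — 2 statements merged into one kernel-verified Lean document; each statement's English description precedes it below -/
import Mathlib

section
/- Let T = {1243, 2314, 3412} (patterns of length 4). Then the generating function for T-avoiders satisfies, as formal power series over ℚ, (1-x)^6·(1-2x)^3·F_T(x) = 1 - 11x + 53x^2 - 145x^3 + 248x^4 - 274x^5 + 192x^6 - 80x^7 + 17x^8; that is, F_T(x) = (1-11x+53x^2-145x^3+248x^4-274x^5+192x^6-80x^7+17x^8)/((1-x)^6(1-2x)^3). -/
open PowerSeries

/-- A permutation `π` of `{0,…,n-1}` contains the pattern `σ` (of length `k`) if there is an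
order-embedding of positions on which the values of `π` appear in the same relative order as
the values of `σ`. -/
def ContainsPattern {n k : ℕ} (π : Equiv.Perm (Fin n)) (σ : Fin k → Fin k) : Prop :=
  ∃ f : Fin k ↪o Fin n, ∀ a b : Fin k, σ a < σ b ↔ π (f a) < π (f b)

/-- The number of permutations of length `n` avoiding every pattern in `T`. -/
noncomputable def avoiderCount (T : Set (Fin 4 → Fin 4)) (n : ℕ) : ℕ :=
  Nat.card {π : Equiv.Perm (Fin n) // ∀ σ ∈ T, ¬ ContainsPattern π σ}

/-- The generating function `F_T(x) = ∑_n |S_n(T)| xⁿ` over `ℚ`. -/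
noncomputable def avoiderGF (T : Set (Fin 4 → Fin 4)) : PowerSeries ℚ :=
  PowerSeries.mk fun n => (avoiderCount T n : ℚ)

/-- The generating function of the Catalan numbers over `ℚ`. -/
noncomputable def catalanGF : PowerSeries ℚ :=
  PowerSeries.mk fun n => (catalan n : ℚ)

/-!
Build the avoiders by prepending letters. A site `w` is active if a first letter at height `w`
starts no forbidden occurrence. Prepending `v` keeps every active site above `v`, while an active
site `w ≤ v` survives exactly when the letters from `v` on increase, the letters below `w`
decrease, and all of the former precede all of the latter. Consequently the tree below a word
depends only on four numbers, its label: how many active sites there are, below how many of them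
the word decreases, from which one on it increases, and how many sites survive a typical
insertion.

Below the empty word only six families of labels with at most two parameters occur, and their
generating functions can be determined one family after the other. For the first four families,
subtracting two instances of the succession rule leaves a relation that determines the series
after division by `1 - X` or `1 - 2 * X`. The last two satisfy recursions
`a n = X * a (n + 1) + r n`, which have exactly one power series solution.
-/

/-! ### Prepending a letter -/

section FinSucc

variable {n : ℕ}

lemma forall_fin_succ_of_lt {P : Fin (n + 1) → Fin (n + 1) → Prop} :
    (∀ c d, c < d → P c d) ↔
      (∀ d : Fin n, P 0 d.succ) ∧ ∀ c d : Fin n, c < d → P c.succ d.succ := by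
  simp [Fin.forall_fin_succ]

lemma forall_fin_succ_of_lt_of_lt {P : Fin (n + 1) → Fin (n + 1) → Fin (n + 1) → Prop} :
    (∀ b c d, b < c → c < d → P b c d) ↔
      (∀ c d : Fin n, c < d → P 0 c.succ d.succ) ∧
        ∀ b c d : Fin n, b < c → c < d → P b.succ c.succ d.succ := by
  simp [Fin.forall_fin_succ]

lemma forall_fin_succ_of_lt_of_lt_of_lt
    {P : Fin (n + 1) → Fin (n + 1) → Fin (n + 1) → Fin (n + 1) → Prop} :
    (∀ a b c d, a < b → b < c → c < d → P a b c d) ↔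
      (∀ b c d : Fin n, b < c → c < d → P 0 b.succ c.succ d.succ) ∧
        ∀ a b c d : Fin n, a < b → b < c → c < d → P a.succ b.succ c.succ d.succ := by
  simp [Fin.forall_fin_succ]

end FinSucc

/-- The order embedding of `ℕ` into itself that skips the value `v`; an analogue of
`Fin.succAbove` that keeps all values in `ℕ`. -/
def skip (v x : ℕ) : ℕ := if x < v then x else x + 1

lemma skip_lt_skip_iff {v a b : ℕ} : skip v a < skip v b ↔ a < b := by
  unfold skip; split_ifs <;> omega

lemma skip_lt_iff {v w : ℕ} (h : w ≤ v) {a : ℕ} : skip v a < w ↔ a < w := by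
  unfold skip; split_ifs <;> omega

lemma skip_lt_succ_iff {v w : ℕ} (h : v ≤ w) {a : ℕ} : skip v a < w + 1 ↔ a < w := by
  unfold skip; split_ifs <;> omega

lemma le_skip_iff {v w : ℕ} (h : w ≤ v) {a : ℕ} : w ≤ skip v a ↔ w ≤ a := by
  simpa only [not_lt] using (skip_lt_iff h).not

lemma succ_le_skip_iff {v w : ℕ} (h : v ≤ w) {a : ℕ} : w + 1 ≤ skip v a ↔ w ≤ a := by
  simpa only [not_lt] using (skip_lt_succ_iff h).not

lemma lt_skip_iff {v a : ℕ} : v < skip v a ↔ v ≤ a := succ_le_skip_iff le_rfl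

lemma val_succAbove_eq_skip {n : ℕ} (v : Fin (n + 1)) (x : Fin n) :
    (v.succAbove x : ℕ) = skip v x := by
  simp only [Fin.succAbove, Fin.lt_def, Fin.val_castSucc, skip]
  split_ifs <;> rfl

/-- Words are functions `Fin n → ℕ`. `prepend v f` is the word with first letter `v` whose
remaining letters are order isomorphic to `f` and avoid the value `v`. -/
def prepend {n : ℕ} (v : ℕ) (f : Fin n → ℕ) : Fin (n + 1) → ℕ :=
  Fin.cons v fun i => skip v (f i)

/-- `f` avoids the patterns 1243, 2314 and 3412. -/
def Avoids {n : ℕ} (f : Fin n → ℕ) : Prop :=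
  ∀ a b c d : Fin n, a < b → b < c → c < d →
    ¬(f a < f b ∧ f b < f d ∧ f d < f c) ∧
    ¬(f c < f a ∧ f a < f b ∧ f b < f d) ∧
    ¬(f c < f d ∧ f d < f a ∧ f a < f b)

/-- The site `w` of `f` is active if prepending the letter `w` creates no occurrence of
1243, 2314 or 3412 starting with this letter. -/
def ActiveSite {n : ℕ} (f : Fin n → ℕ) (w : ℕ) : Prop :=
  ∀ b c d : Fin n, b < c → c < d →
    ¬(w ≤ f b ∧ f b < f d ∧ f d < f c) ∧
    ¬(f c < w ∧ w ≤ f b ∧ f b < f d) ∧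
    ¬(f c < f d ∧ f d < w ∧ w ≤ f b)

/-- The letters of `f` that are at least `w` form a weakly increasing subword. -/
def IncreasingFrom {n : ℕ} (f : Fin n → ℕ) (w : ℕ) : Prop :=
  ∀ c d : Fin n, c < d → ¬(w ≤ f d ∧ f d < f c)

/-- The letters of `f` that are less than `w` form a weakly decreasing subword. -/
def DecreasingBelow {n : ℕ} (f : Fin n → ℕ) (w : ℕ) : Prop :=
  ∀ c d : Fin n, c < d → ¬(f c < f d ∧ f d < w)

/-- Every letter of `f` that is at least `v` occurs before every letter less than `w`
(for `w ≤ v`). -/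
def HighBeforeLow {n : ℕ} (f : Fin n → ℕ) (v w : ℕ) : Prop :=
  ∀ c d : Fin n, c < d → ¬(f c < w ∧ v ≤ f d)

/-- The condition under which an active site `w ≤ v` stays active when `v` is prepended. -/
def StaysActive {n : ℕ} (f : Fin n → ℕ) (v w : ℕ) : Prop :=
  IncreasingFrom f v ∧ HighBeforeLow f v w ∧ DecreasingBelow f w

section Prepend

variable {n : ℕ} {f : Fin n → ℕ} {u v w : ℕ}

@[simp]
lemma prepend_zero (v : ℕ) (f : Fin n → ℕ) : prepend v f 0 = v := rfl

@[simp]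
lemma prepend_succ (v : ℕ) (f : Fin n → ℕ) (i : Fin n) :
    prepend v f i.succ = skip v (f i) := rfl

lemma avoids_prepend : Avoids (prepend v f) ↔ Avoids f ∧ ActiveSite f v := by
  rw [Avoids, forall_fin_succ_of_lt_of_lt_of_lt, and_comm]
  simp only [prepend_zero, prepend_succ, skip_lt_skip_iff, lt_skip_iff, skip_lt_iff le_rfl,
    Avoids, ActiveSite]

lemma activeSite_prepend_of_le (h : w ≤ v) :
    ActiveSite (prepend v f) w ↔ ActiveSite f w ∧ StaysActive f v w := by
  rw [ActiveSite, forall_fin_succ_of_lt_of_lt, and_comm]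
  simp only [prepend_zero, prepend_succ, skip_lt_skip_iff, lt_skip_iff, skip_lt_iff h,
    le_skip_iff h, h, true_and, and_true, forall_and, ActiveSite, StaysActive, IncreasingFrom,
    HighBeforeLow, DecreasingBelow]

lemma activeSite_prepend_succ (h : v ≤ w) :
    ActiveSite (prepend v f) (w + 1) ↔ ActiveSite f w := by
  have not_succ_le : ¬w + 1 ≤ v := by omega
  rw [ActiveSite, forall_fin_succ_of_lt_of_lt]
  simp only [prepend_zero, prepend_succ, skip_lt_skip_iff, skip_lt_succ_iff h,
    succ_le_skip_iff h, not_succ_le, false_and, and_false, not_false_eq_true, and_self,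
    implies_true, true_and, ActiveSite]

lemma not_increasingFrom_prepend_of_lt (h : w < v) (hw : w ∈ Set.range f) :
    ¬IncreasingFrom (prepend v f) w := by
  obtain ⟨i, rfl⟩ := hw
  intro hinc
  exact hinc 0 i.succ i.succ_pos ⟨(le_skip_iff h.le).2 le_rfl, (skip_lt_iff le_rfl).2 h⟩

lemma increasingFrom_prepend_self : IncreasingFrom (prepend v f) v ↔ IncreasingFrom f v := by
  rw [IncreasingFrom, forall_fin_succ_of_lt]
  simp only [prepend_zero, prepend_succ, skip_lt_skip_iff, le_skip_iff le_rfl,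
    skip_lt_iff le_rfl, IncreasingFrom, and_iff_right_iff_imp]
  omega

lemma increasingFrom_prepend_succ (h : v ≤ w) :
    IncreasingFrom (prepend v f) (w + 1) ↔ IncreasingFrom f w := by
  rw [IncreasingFrom, forall_fin_succ_of_lt]
  simp only [prepend_zero, prepend_succ, skip_lt_skip_iff, succ_le_skip_iff h,
    skip_lt_iff le_rfl, IncreasingFrom, and_iff_right_iff_imp]
  omega

lemma decreasingBelow_prepend_of_le (h : w ≤ v) :
    DecreasingBelow (prepend v f) w ↔ DecreasingBelow f w := by
  rw [DecreasingBelow, forall_fin_succ_of_lt]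
  simp only [prepend_zero, prepend_succ, skip_lt_skip_iff, skip_lt_iff h, lt_skip_iff,
    DecreasingBelow, and_iff_right_iff_imp]
  omega

lemma decreasingBelow_prepend_self_succ :
    DecreasingBelow (prepend v f) (v + 1) ↔ DecreasingBelow f v := by
  rw [DecreasingBelow, forall_fin_succ_of_lt]
  simp only [prepend_zero, prepend_succ, skip_lt_skip_iff, skip_lt_succ_iff le_rfl, lt_skip_iff,
    DecreasingBelow, and_iff_right_iff_imp]
  omega

lemma not_decreasingBelow_prepend_succ (h : v < w) (hv : v ∈ Set.range f) :
    ¬DecreasingBelow (prepend v f) (w + 1) := by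
  obtain ⟨i, rfl⟩ := hv
  intro hdec
  exact hdec 0 i.succ i.succ_pos ⟨lt_skip_iff.2 le_rfl, (skip_lt_succ_iff h.le).2 h⟩

lemma highBeforeLow_prepend_of_le (hw : w ≤ v) (hu : u ≤ v) :
    HighBeforeLow (prepend v f) u w ↔ HighBeforeLow f u w := by
  rw [HighBeforeLow, forall_fin_succ_of_lt]
  simp only [prepend_zero, prepend_succ, skip_lt_iff hw, le_skip_iff hu, hw.not_gt, false_and,
    not_false_eq_true, implies_true, true_and, HighBeforeLow]

lemma highBeforeLow_prepend_succ_left (hw : w ≤ v) (hu : v ≤ u) :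
    HighBeforeLow (prepend v f) (u + 1) w ↔ HighBeforeLow f u w := by
  rw [HighBeforeLow, forall_fin_succ_of_lt]
  simp only [prepend_zero, prepend_succ, skip_lt_iff hw, succ_le_skip_iff hu, hw.not_gt,
    false_and, not_false_eq_true, implies_true, true_and, HighBeforeLow]

lemma not_highBeforeLow_prepend_succ_succ (hw : v ≤ w) (hu : v ≤ u) (hf : u ∈ Set.range f) :
    ¬HighBeforeLow (prepend v f) (u + 1) (w + 1) := by
  obtain ⟨i, rfl⟩ := hf
  intro hhigh
  exact hhigh 0 i.succ i.succ_pos ⟨Nat.lt_succ_of_le hw, (succ_le_skip_iff hu).2 le_rfl⟩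

lemma HighBeforeLow.mono_left {u' : ℕ} (h : HighBeforeLow f u w) (hu : u ≤ u') :
    HighBeforeLow f u' w :=
  fun c d hcd hlt => h c d hcd ⟨hlt.1, hu.trans hlt.2⟩

lemma highBeforeLow_of_forall_lt (h : ∀ i, f i < u) (w : ℕ) : HighBeforeLow f u w :=
  fun _ d _ hlt => (h d).not_ge hlt.2

lemma range_prepend (hf : Set.range f = Set.Iio n) (hv : v ≤ n) :
    Set.range (prepend v f) = Set.Iio (n + 1) := by
  have range_skip : Set.range (fun i => skip v (f i)) = skip v '' Set.Iio n := by
    rw [← hf, ← Set.range_comp, Function.comp_def]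
  rw [prepend, Fin.range_cons, range_skip]
  ext u
  simp only [Set.mem_insert_iff, Set.mem_image, Set.mem_Iio]
  constructor
  · rintro (rfl | ⟨x, hx, rfl⟩)
    · omega
    · exact (skip_lt_succ_iff hv).2 hx
  · intro hu
    rcases lt_trichotomy u v with h | h | h
    · exact Or.inr ⟨u, by omega, if_pos h⟩
    · exact Or.inl h
    · exact Or.inr ⟨u - 1, by omega, by rw [skip, if_neg (by omega)]; omega⟩

end Prepend

/-! ### Labels and the succession rule -/

/-- A node of the generating tree. The active sites of the corresponding words are numbered
`0, …, last` from the bottom. The word is decreasing below exactly the sites numbered less than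
`dec`, increasing from exactly the sites numbered at least `inc`, and `kept` is the number of
sites that stay active when a site between `inc` and `last` (exclusive) is prepended. -/
structure Label where
  last : ℕ
  dec : ℕ
  inc : ℕ
  kept : ℕ

namespace Label

/-- The label of the empty word. -/
def root : Label := ⟨0, 1, 0, 0⟩

/-- The number of active sites that stay active below the new letter when the site numbered `i`
is prepended. -/
def keptAt (L : Label) (i : ℕ) : ℕ :=
  if i < L.inc then 0 else if i = L.last then L.dec else L.kept

/-- The succession rule: the label obtained by prepending the site numbered `i`. -/
def child (L : Label) (i : ℕ) : Label where
  last := L.keptAt i + (L.last - i)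
  dec := L.keptAt i + if i < L.dec then 1 else 0
  inc := if i < L.inc then L.inc - i else if L.keptAt i = i + 1 then i else L.keptAt i
  kept := L.keptAt i

lemma keptAt_of_lt_inc {L : Label} {i : ℕ} (h : i < L.inc) : L.keptAt i = 0 := if_pos h

lemma keptAt_of_inc_le {L : Label} {i : ℕ} (h : L.inc ≤ i) :
    L.keptAt i = if i = L.last then L.dec else L.kept := if_neg h.not_gt

lemma keptAt_child_le (L : Label) (i j : ℕ) : (L.child i).keptAt j ≤ j + 1 := by
  have hzero : i < L.inc → L.keptAt i = 0 := keptAt_of_lt_inc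
  rcases lt_or_ge j (L.child i).inc with hj | hj
  · rw [keptAt_of_lt_inc hj]
    omega
  · rw [keptAt_of_inc_le hj]
    split_ifs with hlast <;> simp only [child] at hj hlast ⊢ <;> split_ifs at hj ⊢ <;> omega

end Label

/-- The new numbering of the active sites after prepending the site `s i`: the `k` lowest ones
stay in place and those from `s i` on are shifted up; the site `s i` splits in two when
`k = i + 1`. -/
def shiftedSites (s : ℕ → ℕ) (k i j : ℕ) : ℕ :=
  if j < k then s j else s (i + (j - k)) + 1

lemma shiftedSites_of_lt (s : ℕ → ℕ) {k j : ℕ} (i : ℕ) (h : j < k) :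
    shiftedSites s k i j = s j := if_pos h

lemma shiftedSites_add (s : ℕ → ℕ) (k i j : ℕ) :
    shiftedSites s k i (k + j) = s (i + j) + 1 := by
  rw [shiftedSites, if_neg (by omega), Nat.add_sub_cancel_left]

lemma strictMono_shiftedSites {s : ℕ → ℕ} (hs : StrictMono s) {k i : ℕ} (hk : k ≤ i + 1) :
    StrictMono (shiftedSites s k i) := by
  refine strictMono_nat_of_lt_succ fun j => ?_
  rcases lt_or_ge j k with hj | hj
  · rw [shiftedSites_of_lt s i hj]
    rcases (Nat.succ_le_of_lt hj).lt_or_eq with hj' | rfl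
    · rw [shiftedSites_of_lt s i hj']
      exact hs j.lt_succ_self
    · calc s j < s i + 1 := Nat.lt_succ_of_le (hs.monotone (by omega))
        _ = shiftedSites s (j + 1) i (j + 1) := (shiftedSites_add s (j + 1) i 0).symm
  · obtain ⟨t, rfl⟩ := Nat.exists_eq_add_of_le hj
    rw [add_assoc, shiftedSites_add, shiftedSites_add]
    exact Nat.succ_lt_succ (hs (by omega))

/-- `s 0 < s 1 < ⋯ < s L.last = n` are the active sites of `f`, and the statistics recorded by the
label `L` are those of `f`. The values of `s` beyond `L.last` are irrelevant. -/
structure HasLabel {n : ℕ} (f : Fin n → ℕ) (s : ℕ → ℕ) (L : Label) : Prop where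
  strictMono : StrictMono s
  site_last : s L.last = n
  activeSite_iff : ∀ w ≤ n, ActiveSite f w ↔ ∃ i ≤ L.last, s i = w
  decreasingBelow_iff : ∀ i ≤ L.last, DecreasingBelow f (s i) ↔ i < L.dec
  increasingFrom_iff : ∀ i ≤ L.last, IncreasingFrom f (s i) ↔ L.inc ≤ i
  staysActive_iff : ∀ i ≤ L.last, ∀ j ≤ i, StaysActive f (s i) (s j) ↔ j < L.keptAt i
  keptAt_le : ∀ i ≤ L.last, L.keptAt i ≤ i + 1

namespace HasLabel

variable {n : ℕ} {f : Fin n → ℕ} {s : ℕ → ℕ} {L : Label} {i : ℕ}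

lemma site_le (h : HasLabel f s L) (hi : i ≤ L.last) : s i ≤ n :=
  h.site_last ▸ h.strictMono.monotone hi

lemma site_mem_range (h : HasLabel f s L) (hf : Set.range f = Set.Iio n) (hi : i < L.last) :
    s i ∈ Set.range f := by
  rw [hf, Set.mem_Iio, ← h.site_last]
  exact h.strictMono hi

lemma activeSite_prepend_iff (h : HasLabel f s L) (hi : i ≤ L.last) {w : ℕ} (hw : w ≤ n + 1) :
    ActiveSite (prepend (s i) f) w ↔
      ∃ j ≤ (L.child i).last, shiftedSites s (L.keptAt i) i j = w := by
  have hk := h.keptAt_le i hi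
  have hle : ∀ {a b}, s a ≤ s b ↔ a ≤ b := h.strictMono.le_iff_le
  simp only [Label.child]
  rcases le_or_gt w (s i) with hwi | hwi
  · rw [activeSite_prepend_of_le hwi, h.activeSite_iff w (hwi.trans (h.site_le hi))]
    constructor
    · rintro ⟨⟨j, -, rfl⟩, hstays⟩
      have hj := (h.staysActive_iff i hi j (hle.1 hwi)).1 hstays
      exact ⟨j, by omega, shiftedSites_of_lt s i hj⟩
    · rintro ⟨j, -, rfl⟩
      rcases lt_or_ge j (L.keptAt i) with hj | hj
      · rw [shiftedSites_of_lt s i hj]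
        exact ⟨⟨j, by omega, rfl⟩, (h.staysActive_iff i hi j (by omega)).2 hj⟩
      · obtain ⟨t, rfl⟩ := Nat.exists_eq_add_of_le hj
        rw [shiftedSites_add] at hwi
        have : s i ≤ s (i + t) := hle.2 (Nat.le_add_right i t)
        omega
  · obtain ⟨w, rfl⟩ := Nat.exists_eq_add_one_of_ne_zero (Nat.ne_zero_of_lt hwi)
    rw [activeSite_prepend_succ (Nat.le_of_lt_succ hwi), h.activeSite_iff w (by omega)]
    constructor
    · rintro ⟨j, hj, rfl⟩
      obtain ⟨t, rfl⟩ := Nat.exists_eq_add_of_le (hle.1 (Nat.le_of_lt_succ hwi))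
      exact ⟨L.keptAt i + t, by omega, shiftedSites_add s _ i t⟩
    · rintro ⟨j, hj, hjw⟩
      rcases lt_or_ge j (L.keptAt i) with hj' | hj'
      · rw [shiftedSites_of_lt s i hj'] at hjw
        have : s j ≤ s i := hle.2 (by omega)
        omega
      · obtain ⟨t, rfl⟩ := Nat.exists_eq_add_of_le hj'
        rw [shiftedSites_add] at hjw
        exact ⟨i + t, by omega, by omega⟩

lemma decreasingBelow_prepend_iff (h : HasLabel f s L) (hf : Set.range f = Set.Iio n)
    (hi : i ≤ L.last) {j : ℕ} (hj : j ≤ (L.child i).last) :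
    DecreasingBelow (prepend (s i) f) (shiftedSites s (L.keptAt i) i j) ↔
      j < (L.child i).dec := by
  have hk := h.keptAt_le i hi
  simp only [Label.child] at hj ⊢
  rcases lt_or_ge j (L.keptAt i) with hjk | hjk
  · rw [shiftedSites_of_lt s i hjk,
      decreasingBelow_prepend_of_le (h.strictMono.monotone (by omega))]
    exact iff_of_true ((h.staysActive_iff i hi j (by omega)).2 hjk).2.2 (by omega)
  · obtain ⟨t, rfl⟩ := Nat.exists_eq_add_of_le hjk
    rw [shiftedSites_add]
    rcases t.eq_zero_or_pos with rfl | ht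
    · rw [add_zero, decreasingBelow_prepend_self_succ, h.decreasingBelow_iff i hi]
      split_ifs <;> omega
    · exact iff_of_false (not_decreasingBelow_prepend_succ (h.strictMono (by omega))
        (h.site_mem_range hf (by omega))) (by split_ifs <;> omega)

lemma increasingFrom_prepend_iff (h : HasLabel f s L) (hf : Set.range f = Set.Iio n)
    (hi : i ≤ L.last) {j : ℕ} (hj : j ≤ (L.child i).last) :
    IncreasingFrom (prepend (s i) f) (shiftedSites s (L.keptAt i) i j) ↔
      (L.child i).inc ≤ j := by
  have hk := h.keptAt_le i hi
  have hzero : i < L.inc → L.keptAt i = 0 := Label.keptAt_of_lt_inc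
  simp only [Label.child] at hj ⊢
  rcases lt_or_ge j (L.keptAt i) with hjk | hjk
  · rw [shiftedSites_of_lt s i hjk]
    rcases (show j ≤ i by omega).eq_or_lt with rfl | hji
    · rw [increasingFrom_prepend_self, h.increasingFrom_iff j hi]
      split_ifs <;> omega
    · exact iff_of_false (not_increasingFrom_prepend_of_lt (h.strictMono hji)
        (h.site_mem_range hf (by omega))) (by split_ifs <;> omega)
  · obtain ⟨t, rfl⟩ := Nat.exists_eq_add_of_le hjk
    rw [shiftedSites_add, increasingFrom_prepend_succ (h.strictMono.monotone (by omega)),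
      h.increasingFrom_iff _ (by omega)]
    split_ifs <;> omega

lemma highBeforeLow_prepend_of_lt_keptAt (h : HasLabel f s L) (hi : i ≤ L.last) {j j' : ℕ}
    (hj : (L.child i).inc ≤ j) (hj' : j' < L.keptAt i) :
    HighBeforeLow (prepend (s i) f) (shiftedSites s (L.keptAt i) i j)
      (shiftedSites s (L.keptAt i) i j') := by
  have hk := h.keptAt_le i hi
  have hzero : i < L.inc → L.keptAt i = 0 := Label.keptAt_of_lt_inc
  have hhigh := ((h.staysActive_iff i hi j' (by omega)).2 hj').2.1
  have hsite : s j' ≤ s i := h.strictMono.monotone (by omega)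
  rw [shiftedSites_of_lt s i hj']
  rcases lt_or_ge j (L.keptAt i) with hjk | hjk
  · obtain rfl : j = i := by
      simp only [Label.child] at hj
      split_ifs at hj <;> omega
    rw [shiftedSites_of_lt s j hjk]
    exact (highBeforeLow_prepend_of_le hsite le_rfl).2 hhigh
  · obtain ⟨t, rfl⟩ := Nat.exists_eq_add_of_le hjk
    have hit : s i ≤ s (i + t) := h.strictMono.monotone (Nat.le_add_right i t)
    rw [shiftedSites_add]
    exact (highBeforeLow_prepend_succ_left hsite hit).2 (hhigh.mono_left hit)

lemma shiftedSites_child_last (h : HasLabel f s L) (hi : i ≤ L.last) :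
    shiftedSites s (L.keptAt i) i (L.child i).last = n + 1 := by
  rw [Label.child, shiftedSites_add, Nat.add_sub_cancel' hi, h.site_last]

lemma highBeforeLow_prepend_iff_of_keptAt_le (h : HasLabel f s L)
    (hf : Set.range f = Set.Iio n) (hi : i ≤ L.last) {j j' : ℕ} (hj : j ≤ (L.child i).last)
    (hj' : L.keptAt i ≤ j') (hjj' : j' ≤ j) :
    HighBeforeLow (prepend (s i) f) (shiftedSites s (L.keptAt i) i j)
      (shiftedSites s (L.keptAt i) i j') ↔ j = (L.child i).last := by
  rcases hj.eq_or_lt with rfl | hlt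
  · rw [h.shiftedSites_child_last hi]
    have letter_lt : ∀ k, prepend (s i) f k < n + 1 :=
      Set.range_subset_iff.1 (range_prepend hf (h.site_le hi)).subset
    exact iff_of_true (highBeforeLow_of_forall_lt letter_lt _) rfl
  · obtain ⟨t, rfl⟩ := Nat.exists_eq_add_of_le (hj'.trans hjj')
    obtain ⟨t', rfl⟩ := Nat.exists_eq_add_of_le hj'
    rw [shiftedSites_add, shiftedSites_add]
    simp only [Label.child] at hlt
    exact iff_of_false (not_highBeforeLow_prepend_succ_succ
      (h.strictMono.monotone (Nat.le_add_right i t')) (h.strictMono.monotone (Nat.le_add_right i t))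
      (h.site_mem_range hf (by omega))) hlt.ne

lemma staysActive_prepend_iff (h : HasLabel f s L) (hf : Set.range f = Set.Iio n)
    (hi : i ≤ L.last) {j j' : ℕ} (hj : j ≤ (L.child i).last) (hjj' : j' ≤ j) :
    StaysActive (prepend (s i) f) (shiftedSites s (L.keptAt i) i j)
      (shiftedSites s (L.keptAt i) i j') ↔ j' < (L.child i).keptAt j := by
  rw [StaysActive, h.increasingFrom_prepend_iff hf hi hj,
    h.decreasingBelow_prepend_iff hf hi (hjj'.trans hj)]
  have hkept : (L.child i).kept = L.keptAt i := rfl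
  have hdec : L.keptAt i ≤ (L.child i).dec := Nat.le_add_right _ _
  rcases lt_or_ge j (L.child i).inc with hinc | hinc
  · rw [Label.keptAt_of_lt_inc hinc]
    omega
  rw [Label.keptAt_of_inc_le hinc]
  rcases lt_or_ge j' (L.keptAt i) with hjk | hjk
  · have hhigh := h.highBeforeLow_prepend_of_lt_keptAt hi hinc hjk
    exact iff_of_true ⟨hinc, hhigh, by omega⟩ (by split_ifs <;> omega)
  · rw [h.highBeforeLow_prepend_iff_of_keptAt_le hf hi hj hjk hjj']
    split_ifs <;> omega

theorem prepend (h : HasLabel f s L) (hf : Set.range f = Set.Iio n) (hi : i ≤ L.last) :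
    HasLabel (prepend (s i) f) (shiftedSites s (L.keptAt i) i) (L.child i) where
  strictMono := strictMono_shiftedSites h.strictMono (h.keptAt_le i hi)
  site_last := h.shiftedSites_child_last hi
  activeSite_iff _ := h.activeSite_prepend_iff hi
  decreasingBelow_iff _ := h.decreasingBelow_prepend_iff hf hi
  increasingFrom_iff _ := h.increasingFrom_prepend_iff hf hi
  staysActive_iff _ hj _ := h.staysActive_prepend_iff hf hi hj
  keptAt_le j _ := L.keptAt_child_le i j

end HasLabel

lemma hasLabel_empty (f : Fin 0 → ℕ) : HasLabel f id Label.root where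
  strictMono := strictMono_id
  site_last := rfl
  activeSite_iff := by simp [ActiveSite, Label.root, eq_comm]
  decreasingBelow_iff := by simp [DecreasingBelow, Label.root]
  increasingFrom_iff := by simp [IncreasingFrom, Label.root]
  staysActive_iff := by
    simp [StaysActive, IncreasingFrom, HighBeforeLow, DecreasingBelow, Label.keptAt,
      Label.root]
  keptAt_le := by simp [Label.keptAt, Label.root]

/-! ### Counting avoiders by labels -/

open Classical in
/-- The number of ways of prepending `m` letters to `f`, one after the other, at active sites. -/
noncomputable def numExtensions : ℕ → {n : ℕ} → (Fin n → ℕ) → ℕ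
  | 0, _, _ => 1
  | m + 1, n, f => ∑ v ∈ Finset.range (n + 1) with ActiveSite f v, numExtensions m (prepend v f)

/-- The number of nodes `m` levels below a node labelled `L` in the generating tree. -/
def Label.numDescendants : ℕ → Label → ℕ
  | 0, _ => 1
  | m + 1, L => ∑ i ∈ Finset.range (L.last + 1), (L.child i).numDescendants m

lemma HasLabel.numExtensions_eq (m : ℕ) {n : ℕ} {f : Fin n → ℕ} {s : ℕ → ℕ} {L : Label}
    (h : HasLabel f s L) (hf : Set.range f = Set.Iio n) :
    numExtensions m f = L.numDescendants m := by
  induction m generalizing n f s L with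
  | zero => rfl
  | succ m ih =>
    classical
    have activeSites_eq :
        {v ∈ Finset.range (n + 1) | ActiveSite f v} = (Finset.range (L.last + 1)).image s := by
      ext w
      simp only [Finset.mem_filter, Finset.mem_range, Finset.mem_image, Nat.lt_succ_iff]
      constructor
      · rintro ⟨hw, hactive⟩
        exact (h.activeSite_iff w hw).1 hactive
      · rintro ⟨i, hi, rfl⟩
        exact ⟨h.site_le hi, (h.activeSite_iff _ (h.site_le hi)).2 ⟨i, hi, rfl⟩⟩
    calc numExtensions (m + 1) f
        = ∑ v ∈ Finset.range (n + 1) with ActiveSite f v, numExtensions m (_root_.prepend v f) := by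
          rw [numExtensions]
      _ = ∑ i ∈ Finset.range (L.last + 1), numExtensions m (_root_.prepend (s i) f) := by
          rw [activeSites_eq, Finset.sum_image h.strictMono.injective.injOn]
      _ = ∑ i ∈ Finset.range (L.last + 1), (L.child i).numDescendants m := by
          refine Finset.sum_congr rfl fun i hi => ?_
          have hi : i ≤ L.last := Nat.le_of_lt_succ (Finset.mem_range.1 hi)
          exact ih (h.prepend hf hi) (range_prepend hf (h.site_le hi))

/-- The permutation with first entry `v` whose remaining entries are order isomorphic to `π`. -/
def prependPerm {n : ℕ} (v : Fin (n + 1)) (π : Equiv.Perm (Fin n)) : Equiv.Perm (Fin (n + 1)) :=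
  (finSuccEquiv n).trans (π.optionCongr.trans (finSuccEquiv' v).symm)

/-- The word of the entries of a permutation. -/
def toWord {n : ℕ} (π : Equiv.Perm (Fin n)) (i : Fin n) : ℕ := π i

section Perm

variable {n : ℕ}

@[simp]
lemma prependPerm_zero (v : Fin (n + 1)) (π : Equiv.Perm (Fin n)) : prependPerm v π 0 = v := by
  simp [prependPerm]

@[simp]
lemma prependPerm_succ (v : Fin (n + 1)) (π : Equiv.Perm (Fin n)) (i : Fin n) :
    prependPerm v π i.succ = v.succAbove (π i) := by
  simp [prependPerm]

lemma toWord_prependPerm (v : Fin (n + 1)) (π : Equiv.Perm (Fin n)) :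
    toWord (prependPerm v π) = prepend v (toWord π) := by
  funext i
  refine Fin.cases ?_ (fun i => ?_) i
  · rw [toWord, prependPerm_zero, prepend_zero]
  · rw [toWord, prependPerm_succ, prepend_succ, val_succAbove_eq_skip, toWord]

lemma prependPerm_bijective :
    Function.Bijective fun x : Fin (n + 1) × Equiv.Perm (Fin n) => prependPerm x.1 x.2 := by
  rw [Fintype.bijective_iff_injective_and_card]
  refine ⟨?_, by simp [Fintype.card_perm, Nat.factorial_succ]⟩
  rintro ⟨v, π⟩ ⟨v', π'⟩ (h : prependPerm v π = prependPerm v' π')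
  obtain rfl : v = v' := by simpa using DFunLike.congr_fun h 0
  obtain rfl : π = π' := by
    ext1 i
    simpa using DFunLike.congr_fun h i.succ
  rfl

open Classical in
lemma card_avoiding_perms (m n : ℕ) :
    Fintype.card {π : Equiv.Perm (Fin (n + m)) // Avoids (toWord π)} =
      ∑ π : Equiv.Perm (Fin n) with Avoids (toWord π), numExtensions m (toWord π) := by
  induction m generalizing n with
  | zero => simp [numExtensions, Fintype.card_subtype]
  | succ m ih =>
    rw [show n + (m + 1) = n + 1 + m by omega, ih (n + 1), Finset.sum_filter,
      ← prependPerm_bijective.sum_comp, Fintype.sum_prod_type_right, Finset.sum_filter]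
    refine Finset.sum_congr rfl fun π _ => ?_
    simp only [toWord_prependPerm, avoids_prepend]
    split_ifs with hπ
    · rw [numExtensions, Finset.sum_filter, Finset.sum_range]
      simp only [hπ, true_and]
    · simp only [hπ, false_and, if_false, Finset.sum_const_zero]

end Perm

section Pattern

variable {n : ℕ} (π : Equiv.Perm (Fin n))

lemma containsPattern_iff_of_inverse {k : ℕ} {σ τ : Fin k → Fin k} (hl : Function.LeftInverse τ σ)
    (hr : Function.RightInverse τ σ) :
    ContainsPattern π σ ↔
      ∃ g : Fin k → Fin n, StrictMono g ∧ StrictMono (toWord π ∘ g ∘ τ) := by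
  constructor
  · rintro ⟨g, hg⟩
    refine ⟨g, g.strictMono, fun i j hij => ?_⟩
    exact (hg (τ i) (τ j)).1 (by rwa [hr i, hr j])
  · rintro ⟨g, hg, hmono⟩
    refine ⟨OrderEmbedding.ofStrictMono g hg, fun i j => ?_⟩
    have pattern_iff := (hmono.lt_iff_lt (a := σ i) (b := σ j)).symm
    simp only [Function.comp_apply, hl i, hl j] at pattern_iff
    exact pattern_iff

lemma not_containsPattern_iff_of_inverse {σ τ : Fin 4 → Fin 4} (hl : Function.LeftInverse τ σ)
    (hr : Function.RightInverse τ σ) :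
    ¬ContainsPattern π σ ↔ ∀ a b c d : Fin n, a < b → b < c → c < d →
      ¬StrictMono (toWord π ∘ ![a, b, c, d] ∘ τ) := by
  rw [containsPattern_iff_of_inverse π hl hr, not_exists]
  constructor
  · intro h a b c d hab hbc hcd hmono
    refine h ![a, b, c, d] ⟨?_, hmono⟩
    simp [Fin.strictMono_iff_lt_succ, Fin.forall_fin_succ, hab, hbc, hcd]
  · rintro h g ⟨hg, hmono⟩
    have vec_eq : ![g 0, g 1, g 2, g 3] = g := by
      funext i
      fin_cases i <;> rfl
    exact h (g 0) (g 1) (g 2) (g 3) (hg (by decide)) (hg (by decide)) (hg (by decide))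
      (by rwa [vec_eq])

lemma avoids_toWord_iff :
    (∀ σ ∈ ({![0, 1, 3, 2], ![1, 2, 0, 3], ![2, 3, 0, 1]} : Set (Fin 4 → Fin 4)),
      ¬ContainsPattern π σ) ↔ Avoids (toWord π) := by
  simp only [Set.mem_insert_iff, Set.mem_singleton_iff, forall_eq_or_imp, forall_eq]
  rw [not_containsPattern_iff_of_inverse π (τ := ![0, 1, 3, 2]) (by decide) (by decide),
    not_containsPattern_iff_of_inverse π (τ := ![2, 0, 1, 3]) (by decide) (by decide),
    not_containsPattern_iff_of_inverse π (τ := ![2, 3, 0, 1]) (by decide) (by decide)]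
  simp [Avoids, Fin.strictMono_iff_lt_succ, Fin.forall_fin_succ, forall_and]

end Pattern

lemma avoiderCount_eq_numDescendants (m : ℕ) :
    avoiderCount {![0, 1, 3, 2], ![1, 2, 0, 3], ![2, 3, 0, 1]} m =
      Label.root.numDescendants m := by
  classical
  have range_empty : Set.range (toWord (1 : Equiv.Perm (Fin 0))) = Set.Iio 0 := by simp
  have avoids_empty : Avoids (toWord (default : Equiv.Perm (Fin 0))) := fun a => a.elim0
  have hcard := card_avoiding_perms m 0
  rw [zero_add] at hcard
  simp only [avoiderCount, avoids_toWord_iff, Nat.card_eq_fintype_card]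
  rw [hcard, Finset.sum_filter, Fintype.sum_unique, if_pos avoids_empty]
  exact (hasLabel_empty _).numExtensions_eq m range_empty

/-! ### The families of labels -/

lemma sum_range_eq_sum_range_of_reflect {M : Type*} [AddCommMonoid M] {n : ℕ} {f g : ℕ → M}
    (h : ∀ i < n, f i = g (n - 1 - i)) :
    ∑ i ∈ Finset.range n, f i = ∑ i ∈ Finset.range n, g i := by
  rw [← Finset.sum_range_reflect g]
  exact Finset.sum_congr rfl fun i hi => h i (Finset.mem_range.1 hi)

lemma eq_of_forall_sub_eq_X_mul_sub {R : Type*} [CommRing R] {a b : ℕ → R⟦X⟧}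
    (h : ∀ n, a n - b n = X * (a (n + 1) - b (n + 1))) (n : ℕ) : a n = b n := by
  ext m
  induction m generalizing n with
  | zero => simpa [sub_eq_zero] using congrArg (coeff 0) (h n)
  | succ m ih =>
    have hcoeff := congrArg (coeff (m + 1)) (h n)
    rw [coeff_succ_X_mul, map_sub, map_sub, ih, sub_self] at hcoeff
    exact sub_eq_zero.1 hcoeff

namespace Label

/-- The labels with `dec = 0`. Here and in the next four families the first parameter measures
`inc` and `d = last - max dec inc`. -/
def decZero (c d : ℕ) : Label := ⟨c + d, 0, c, 0⟩

/-- The labels with `dec = 1 ≤ inc` and `kept = 0`. -/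
def decOne (c d : ℕ) : Label := ⟨c + d + 1, 1, c + 1, 0⟩

/-- The labels of excess `dec - inc = 0` with `kept = dec`. -/
def excessZero (p d : ℕ) : Label := ⟨p + d, p, p, p⟩

/-- The labels of excess `dec - inc = 1`. -/
def excessOne (p d : ℕ) : Label := ⟨p + d + 1, p + 1, p, p⟩

/-- The labels of excess `dec - inc = 2` with `dec ≤ last`. -/
def excessTwo (p d : ℕ) : Label := ⟨p + d + 2, p + 2, p, p + 1⟩

/-- The label of the decreasing word of length `p + 1`, which is decreasing below all its
`p + 2` active sites. -/
def decreasing (p : ℕ) : Label := ⟨p + 1, p + 2, p, p + 1⟩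

section SuccessionRule

open Finset

variable {M : Type*} [AddCommMonoid M] (φ : Label → M)

lemma sum_child_decZero (c d : ℕ) :
    ∑ i ∈ range ((decZero c d).last + 1), φ ((decZero c d).child i) =
      ∑ j ∈ range c, φ (decZero (j + 1) d) + ∑ t ∈ range (d + 1), φ (excessZero 0 t) := by
  rw [show (decZero c d).last + 1 = c + (d + 1) from rfl, sum_range_add]
  refine congrArg₂ _ (sum_range_eq_sum_range_of_reflect fun i hi => congrArg φ ?_)
    (sum_range_eq_sum_range_of_reflect fun i hi => congrArg φ ?_)
  all_goals grind [child, keptAt, decZero, excessZero]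

lemma sum_child_decOne (c d : ℕ) :
    ∑ i ∈ range ((decOne c d).last + 1), φ ((decOne c d).child i) =
      φ (decOne c d) + ∑ j ∈ range c, φ (decZero (j + 1) d) +
        (∑ t ∈ range d, φ (excessZero 0 (t + 1)) + φ (excessZero 1 0)) := by
  rw [show (decOne c d).last + 1 = 1 + c + (d + 1) by grind [decOne], sum_range_add,
    sum_range_add _ 1 c, sum_range_one, sum_range_succ _ d]
  refine congrArg₂ _
    (congrArg₂ _ (congrArg φ ?_) (sum_range_eq_sum_range_of_reflect fun i hi => congrArg φ ?_))
    (congrArg₂ _ (sum_range_eq_sum_range_of_reflect fun i hi => congrArg φ ?_) (congrArg φ ?_))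
  all_goals grind [child, keptAt, decOne, decZero, excessZero]

lemma sum_child_excessZero (p d : ℕ) :
    ∑ i ∈ range ((excessZero p d).last + 1), φ ((excessZero p d).child i) =
      ∑ j ∈ range p, φ (decOne j d) + ∑ t ∈ range (d + 1), φ (excessZero p t) := by
  rw [show (excessZero p d).last + 1 = p + (d + 1) from rfl, sum_range_add]
  refine congrArg₂ _ (sum_range_eq_sum_range_of_reflect fun i hi => congrArg φ ?_)
    (sum_range_eq_sum_range_of_reflect fun i hi => congrArg φ ?_)
  all_goals grind [child, keptAt, excessZero, decOne]

lemma sum_child_excessOne (p d : ℕ) :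
    ∑ i ∈ range ((excessOne p d).last + 1), φ ((excessOne p d).child i) =
      ∑ j ∈ range p, φ (decOne j (d + 1)) + φ (excessOne p d) +
        (∑ t ∈ range d, φ (excessZero p (t + 1)) + φ (excessZero (p + 1) 0)) := by
  rw [show (excessOne p d).last + 1 = p + 1 + (d + 1) by grind [excessOne], sum_range_add,
    sum_range_succ _ p, sum_range_succ _ d]
  refine congrArg₂ _
    (congrArg₂ _ (sum_range_eq_sum_range_of_reflect fun i hi => congrArg φ ?_) (congrArg φ ?_))
    (congrArg₂ _ (sum_range_eq_sum_range_of_reflect fun i hi => congrArg φ ?_) (congrArg φ ?_))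
  all_goals grind [child, keptAt, excessOne, decOne, excessZero]

lemma sum_child_excessTwo (p d : ℕ) :
    ∑ i ∈ range ((excessTwo p d).last + 1), φ ((excessTwo p d).child i) =
      ∑ j ∈ range p, φ (decOne j (d + 2)) + φ (excessTwo p (d + 1)) + φ (excessOne (p + 1) d) +
        (∑ t ∈ range d, φ (excessZero (p + 1) (t + 1)) + φ (excessZero (p + 2) 0)) := by
  rw [show (excessTwo p d).last + 1 = p + 1 + 1 + (d + 1) by grind [excessTwo], sum_range_add,
    sum_range_succ _ (p + 1), sum_range_succ _ p, sum_range_succ _ d]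
  refine congrArg₂ _
    (congrArg₂ _
      (congrArg₂ _ (sum_range_eq_sum_range_of_reflect fun i hi => congrArg φ ?_) (congrArg φ ?_))
      (congrArg φ ?_))
    (congrArg₂ _ (sum_range_eq_sum_range_of_reflect fun i hi => congrArg φ ?_) (congrArg φ ?_))
  all_goals grind [child, keptAt, excessTwo, excessOne, decOne, excessZero]

lemma sum_child_decreasing (p : ℕ) :
    ∑ i ∈ range ((decreasing p).last + 1), φ ((decreasing p).child i) =
      ∑ j ∈ range p, φ (decOne j 1) + φ (excessTwo p 0) + φ (decreasing (p + 1)) := by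
  rw [show (decreasing p).last + 1 = p + 1 + 1 from rfl, sum_range_succ _ (p + 1),
    sum_range_succ _ p]
  refine congrArg₂ _
    (congrArg₂ _ (sum_range_eq_sum_range_of_reflect fun i hi => congrArg φ ?_) (congrArg φ ?_))
    (congrArg φ ?_)
  all_goals grind [child, keptAt, decreasing, excessTwo, decOne]

lemma sum_child_root : ∑ i ∈ range (root.last + 1), φ (root.child i) = φ (decreasing 0) := by
  simp [child, keptAt, root, decreasing]

end SuccessionRule

/-! ### Generating functions -/

/-- The generating function counting the descendants of a node labelled `L` by depth. -/
noncomputable def gf (L : Label) : ℚ⟦X⟧ := PowerSeries.mk fun m => (L.numDescendants m : ℚ)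

lemma gf_eq_one_add (L : Label) :
    L.gf = 1 + X * ∑ i ∈ Finset.range (L.last + 1), (L.child i).gf := by
  ext m
  cases m with
  | zero => simp [gf, numDescendants]
  | succ m => simp [gf, numDescendants, coeff_succ_X_mul, coeff_one]

section FunctionalEquations

open Finset

lemma one_sub_X_mul_gf_decZero_succ (c d : ℕ) :
    (1 - X) * (decZero (c + 1) d).gf = (decZero c d).gf := by
  have rule := gf_eq_one_add (decZero c d)
  have rule_succ := gf_eq_one_add (decZero (c + 1) d)
  rw [sum_child_decZero] at rule rule_succ
  rw [sum_range_succ _ c] at rule_succ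
  linear_combination rule_succ - rule

lemma one_sub_X_mul_gf_decOne (c d : ℕ) :
    (1 - X) * (decOne c d).gf =
      (decZero c d).gf + X * ((excessZero 1 0).gf - (excessZero 0 0).gf) := by
  have rule := gf_eq_one_add (decOne c d)
  have rule_decZero := gf_eq_one_add (decZero c d)
  rw [sum_child_decOne] at rule
  rw [sum_child_decZero, sum_range_succ' _ d] at rule_decZero
  linear_combination rule - rule_decZero

lemma one_sub_X_mul_gf_excessZero_zero (p : ℕ) :
    (1 - X) * (excessZero p 0).gf = 1 + X * ∑ j ∈ range p, (decOne j 0).gf := by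
  have rule := gf_eq_one_add (excessZero p 0)
  rw [sum_child_excessZero, zero_add, sum_range_one] at rule
  linear_combination rule

lemma one_sub_X_mul_gf_excessZero_succ (p d : ℕ) :
    (1 - X) * (excessZero p (d + 1)).gf = (excessZero p d).gf +
      X * (∑ j ∈ range p, (decOne j (d + 1)).gf - ∑ j ∈ range p, (decOne j d).gf) := by
  have rule := gf_eq_one_add (excessZero p d)
  have rule_succ := gf_eq_one_add (excessZero p (d + 1))
  rw [sum_child_excessZero] at rule rule_succ
  rw [sum_range_succ _ (d + 1)] at rule_succ
  linear_combination rule_succ - rule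

lemma one_sub_X_mul_gf_excessOne (p d : ℕ) :
    (1 - X) * ((excessOne p d).gf - (excessZero p (d + 1)).gf) =
      X * ((excessZero (p + 1) 0).gf - (excessZero p 0).gf) := by
  have rule := gf_eq_one_add (excessOne p d)
  have rule_excessZero := gf_eq_one_add (excessZero p (d + 1))
  rw [sum_child_excessOne] at rule
  rw [sum_child_excessZero, sum_range_succ _ (d + 1), sum_range_succ' _ d] at rule_excessZero
  linear_combination rule - rule_excessZero

lemma gf_excessTwo_eq_X_mul_add (p d : ℕ) :
    (excessTwo p d).gf = X * (excessTwo p (d + 1)).gf + (excessOne (p + 1) d).gf +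
      X * (∑ j ∈ range p, (decOne j (d + 2)).gf - ∑ j ∈ range (p + 1), (decOne j (d + 1)).gf) := by
  have rule := gf_eq_one_add (excessTwo p d)
  have rule_excessZero := gf_eq_one_add (excessZero (p + 1) (d + 1))
  rw [sum_child_excessTwo] at rule
  rw [sum_child_excessZero, sum_range_succ _ (d + 1), sum_range_succ' _ d] at rule_excessZero
  linear_combination rule - rule_excessZero - one_sub_X_mul_gf_excessOne (p + 1) d

lemma gf_decreasing_eq_X_mul_add (p : ℕ) :
    (decreasing p).gf = X * (decreasing (p + 1)).gf + 1 +
      X * ∑ j ∈ range p, (decOne j 1).gf + X * (excessTwo p 0).gf := by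
  have rule := gf_eq_one_add (decreasing p)
  rw [sum_child_decreasing] at rule
  linear_combination rule

lemma gf_root : root.gf = 1 + X * (decreasing 0).gf := by
  rw [gf_eq_one_add, sum_child_root]

end FunctionalEquations

section ClosedForms

variable {y z : ℚ⟦X⟧}

lemma gf_excessZero_zero_left (hy : (1 - X) * y = 1) (d : ℕ) :
    (excessZero 0 d).gf = y ^ (d + 1) := by
  induction d with
  | zero =>
    have step := one_sub_X_mul_gf_excessZero_zero 0
    rw [Finset.sum_range_zero] at step
    linear_combination y * step - (excessZero 0 0).gf * hy
  | succ d ih =>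
    have step := one_sub_X_mul_gf_excessZero_succ 0 d
    rw [Finset.sum_range_zero, Finset.sum_range_zero, ih] at step
    linear_combination y * step - (excessZero 0 (d + 1)).gf * hy

lemma gf_decZero (hy : (1 - X) * y = 1) (c d : ℕ) : (decZero c d).gf = y ^ (c + d + 1) := by
  induction c with
  | zero =>
    rw [zero_add, ← gf_excessZero_zero_left hy]
    rfl
  | succ c ih =>
    have step := one_sub_X_mul_gf_decZero_succ c d
    rw [ih] at step
    linear_combination y * step - (decZero (c + 1) d).gf * hy

lemma gf_excessZero_one_zero (hy : (1 - X) * y = 1) (hz : (1 - 2 * X) * z = 1) :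
    (excessZero 1 0).gf = z := by
  have eq_decOne := one_sub_X_mul_gf_decOne 0 0
  have eq_self := one_sub_X_mul_gf_excessZero_zero 1
  rw [gf_decZero hy, gf_excessZero_zero_left hy] at eq_decOne
  rw [Finset.sum_range_one] at eq_self
  have one_sub_two_X_mul_gf : (1 - 2 * X) * (excessZero 1 0).gf = 1 := by
    linear_combination (1 - X) * eq_self + X * eq_decOne + X * hy
  linear_combination z * one_sub_two_X_mul_gf - (excessZero 1 0).gf * hz

lemma gf_decOne (hy : (1 - X) * y = 1) (hz : (1 - 2 * X) * z = 1) (c d : ℕ) :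
    (decOne c d).gf = y ^ (c + d + 2) + X ^ 2 * y ^ 2 * z := by
  have step := one_sub_X_mul_gf_decOne c d
  rw [gf_decZero hy, gf_excessZero_one_zero hy hz, gf_excessZero_zero_left hy] at step
  have z_sub_y : z - y = X * y * z := by grind
  linear_combination y * step - (decOne c d).gf * hy + X * y * z_sub_y

lemma X_mul_sum_gf_decOne (hy : (1 - X) * y = 1) (hz : (1 - 2 * X) * z = 1) (p d : ℕ) :
    X * ∑ j ∈ Finset.range p, (decOne j d).gf =
      y ^ (d + 1) * (y ^ p - 1) + (p : ℚ⟦X⟧) * (X ^ 3 * y ^ 2 * z) := by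
  induction p with
  | zero => simp
  | succ p ih =>
    rw [Finset.sum_range_succ, mul_add, ih, gf_decOne hy hz]
    push_cast
    linear_combination -y ^ (p + d + 1) * hy

lemma gf_excessZero (hy : (1 - X) * y = 1) (hz : (1 - 2 * X) * z = 1) (p d : ℕ) :
    (excessZero p d).gf =
      y ^ (d + 1) *
        (1 + y * (1 + (d : ℚ⟦X⟧) * X) * (y ^ p - 1) + (p : ℚ⟦X⟧) * (X ^ 3 * y ^ 2 * z)) := by
  induction d with
  | zero =>
    have step := one_sub_X_mul_gf_excessZero_zero p
    rw [X_mul_sum_gf_decOne hy hz] at step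
    push_cast
    linear_combination y * step - (excessZero p 0).gf * hy
  | succ d ih =>
    have step := one_sub_X_mul_gf_excessZero_succ p d
    rw [mul_sub, X_mul_sum_gf_decOne hy hz, X_mul_sum_gf_decOne hy hz, ih] at step
    push_cast
    linear_combination y * step - (excessZero p (d + 1)).gf * hy + y ^ (d + 2) * (y ^ p - 1) * hy

lemma gf_excessOne (hy : (1 - X) * y = 1) (hz : (1 - 2 * X) * z = 1) (p d : ℕ) :
    (excessOne p d).gf =
      (excessZero p (d + 1)).gf + X ^ 2 * y ^ (p + 4) + X ^ 4 * y ^ 4 * z := by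
  have step := one_sub_X_mul_gf_excessOne p d
  rw [gf_excessZero hy hz (p + 1), gf_excessZero hy hz p 0] at step
  push_cast at step
  linear_combination y * step - ((excessOne p d).gf - (excessZero p (d + 1)).gf) * hy +
    X * y ^ (p + 3) * hy

-- The inhomogeneous term of the recursion in `d` is a combination of `y ^ d`, `d * y ^ d` and `1`
-- with coefficients free of `d`, so a solution of this shape is found by comparing coefficients.
lemma gf_excessTwo (hy : (1 - X) * y = 1) (hz : (1 - 2 * X) * z = 1) (p d : ℕ) :
    (excessTwo p d).gf =
      y ^ (d + 1) *
          (z * (z + ((d : ℚ⟦X⟧) + 1) * (X * y ^ 2)) * y ^ p + (p : ℚ⟦X⟧) * (X ^ 3 * y ^ 2 * z ^ 2)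
            - X * y * z * (y + (d : ℚ⟦X⟧) + 2))
        + X ^ 2 * y ^ (p + 6) + X ^ 3 * y ^ 3 * z * (X * y ^ 2 - 1) := by
  revert d
  refine eq_of_forall_sub_eq_X_mul_sub fun d => ?_
  rw [gf_excessTwo_eq_X_mul_add p d, mul_sub X (∑ j ∈ _, _), X_mul_sum_gf_decOne hy hz,
    X_mul_sum_gf_decOne hy hz, gf_excessOne hy hz, gf_excessZero hy hz]
  push_cast
  simp only [pow_succ]
  generalize y ^ p = Y
  generalize y ^ d = W
  generalize (p : ℚ⟦X⟧) = P
  generalize (d : ℚ⟦X⟧) = D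
  grind

lemma gf_decreasing (hy : (1 - X) * y = 1) (hz : (1 - 2 * X) * z = 1) (p : ℕ) :
    (decreasing p).gf =
      z * (y + X * z ^ 2 + X ^ 2 * y ^ 2 * z + X ^ 3 * y ^ 5) * y ^ p
        + (p : ℚ⟦X⟧) * (X ^ 3 * y ^ 3 * z * (1 + X * y * z))
        + y - y ^ 3 - X ^ 2 * y ^ 3 * z * (2 + y) + X ^ 5 * y ^ 5 * z * (y + z) := by
  revert p
  refine eq_of_forall_sub_eq_X_mul_sub fun p => ?_
  rw [gf_decreasing_eq_X_mul_add p, X_mul_sum_gf_decOne hy hz, gf_excessTwo hy hz]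
  push_cast
  simp only [pow_succ]
  generalize y ^ p = Y
  generalize (p : ℚ⟦X⟧) = P
  grind

end ClosedForms

end Label

lemma avoiderGF_eq_gf_root :
    avoiderGF {![0, 1, 3, 2], ![1, 2, 0, 3], ![2, 3, 0, 1]} = Label.root.gf :=
  congrArg PowerSeries.mk (funext fun m => congrArg Nat.cast (avoiderCount_eq_numDescendants m))

theorem statement_0 :
    ((1 : PowerSeries ℚ) - X)^6 * (1 - 2*X)^3 * avoiderGF ({![0,1,3,2], ![1,2,0,3], ![2,3,0,1]} : Set (Fin 4 → Fin 4)) =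
      1 - 11*X + 53*X^2 - 145*X^3 + 248*X^4 - 274*X^5 + 192*X^6 - 80*X^7 + 17*X^8 := by
  have hy : (1 - X : ℚ⟦X⟧) * (1 - X)⁻¹ = 1 := PowerSeries.mul_inv_cancel _ (by simp)
  have hz : (1 - 2 * X : ℚ⟦X⟧) * (1 - 2 * X)⁻¹ = 1 := PowerSeries.mul_inv_cancel _ (by simp)
  rw [avoiderGF_eq_gf_root, Label.gf_root, Label.gf_decreasing hy hz]
  generalize (1 - X : ℚ⟦X⟧)⁻¹ = y at *
  generalize (1 - 2 * X : ℚ⟦X⟧)⁻¹ = z at *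
  push_cast
  grind
end

section
/- Let T = {1423, 2341, 3124} (patterns of length 4). Then the generating function for T-avoiders satisfies, as formal power series over ℚ, (1-x)^5·(1-4x+5x^2-3x^3)·F_T(x) = (1 - 9x + 35x^2 - 77x^3 + 107x^4 - 97x^5 + 55x^6 - 17x^7 + x^8)·C(x), where C(x) is the Catalan number generating function. -/
open PowerSeries

/-!
Delete the largest letter. It may be put back at position `p` of a `T`-avoider `σ` in two ways.

If the first `p` letters of `σ` decrease, the recurrence on `(n, p)` is that of the ballot numbers:
the number of such `σ` of length `n` is the coefficient of `xⁿ` in `F_T · (x C)ᵖ`.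

If the first `p` letters of `σ` contain an ascent, avoiding `1423` and `2341` forces the letters
from position `p` on to decrease. Such `σ` are rigid enough to be counted by deleting their maximum
again, which reduces them to permutations avoiding `312` and `2341`; the generating function `A` of
the pairs `(σ, p)` is rational.

Summing over `p` gives `F_T = 1 + x C F_T + x A`, so `F_T = C (1 + x A)` because `C = 1 + x C²`.
-/

namespace PermPattern

open Equiv

variable {n : ℕ}

/-- The permutation obtained from `σ` by inserting a new largest letter at position `p`. -/
def insertMax (p : Fin (n + 1)) (σ : Perm (Fin n)) : Perm (Fin (n + 1)) :=
  ((finSuccEquiv' p).trans (optionCongr σ)).trans (finSuccEquiv' (Fin.last n)).symm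

@[simp] lemma insertMax_self (p : Fin (n + 1)) (σ : Perm (Fin n)) :
    insertMax p σ p = Fin.last n := by
  simp [insertMax]

@[simp] lemma insertMax_succAbove (p : Fin (n + 1)) (σ : Perm (Fin n)) (i : Fin n) :
    insertMax p σ (p.succAbove i) = (σ i).castSucc := by
  simp [insertMax]

lemma insertMax_bijective :
    Function.Bijective fun x : Fin (n + 1) × Perm (Fin n) ↦ insertMax x.1 x.2 := by
  refine (Fintype.bijective_iff_injective_and_card _).2 ⟨?_, by
    simp [Fintype.card_perm, Nat.factorial_succ]⟩
  rintro ⟨p, σ⟩ ⟨q, τ⟩ (h : insertMax p σ = insertMax q τ)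
  obtain rfl : p = q := (insertMax q τ).injective <| by rw [insertMax_self, ← h, insertMax_self]
  suffices σ = τ by rw [this]
  ext i
  simpa [Fin.ext_iff] using DFunLike.congr_fun h (p.succAbove i)

section

variable {p : Fin (n + 1)} {σ : Perm (Fin n)} {i j : Fin n}

lemma val_succAbove : (p.succAbove i : ℕ) = if (i : ℕ) < p then (i : ℕ) else i + 1 := by
  grind [Fin.succAbove]

lemma succAbove_lt_self_iff : p.succAbove i < p ↔ (i : ℕ) < p := by
  rw [Fin.succAbove_lt_iff_castSucc_lt, Fin.lt_def, Fin.val_castSucc]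

lemma self_lt_succAbove_iff : p < p.succAbove i ↔ (p : ℕ) ≤ i := by
  rw [Fin.lt_succAbove_iff_le_castSucc, Fin.le_def, Fin.val_castSucc]

lemma insertMax_succAbove_lt_succAbove_iff :
    insertMax p σ (p.succAbove i) < insertMax p σ (p.succAbove j) ↔ σ i < σ j := by
  simp

lemma insertMax_succAbove_lt_self : insertMax p σ (p.succAbove i) < insertMax p σ p := by
  simp [Fin.castSucc_lt_last]

lemma not_insertMax_self_lt {x : Fin (n + 1)} : ¬ insertMax p σ p < insertMax p σ x := by
  simp [Fin.le_last]

end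

lemma lt_iff_not_lt (σ : Perm (Fin n)) {i j : Fin n} (h : i ≠ j) : σ i < σ j ↔ ¬ σ j < σ i := by
  grind [σ.injective.ne h]

/-! ### Counting permutations by the position of the maximum -/

/-- The number of permutations of `Fin n` with the property `P`. -/
noncomputable def countPerm (n : ℕ) (P : Perm (Fin n) → Prop) : ℕ := Nat.card {σ // P σ}

lemma countPerm_congr {P Q : Perm (Fin n) → Prop} (h : ∀ σ, P σ ↔ Q σ) :
    countPerm n P = countPerm n Q :=
  Nat.card_congr (Equiv.subtypeEquivRight h)

lemma countPerm_eq_zero {P : Perm (Fin n) → Prop} (h : ∀ σ, ¬ P σ) : countPerm n P = 0 :=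
  have := Subtype.isEmpty_of_false h
  Nat.card_of_isEmpty

lemma countPerm_zero {P : Perm (Fin 0) → Prop} (h : ∀ σ, P σ) : countPerm 0 P = 1 := by
  simp [countPerm, h]

lemma countPerm_eq_add_not (P Q : Perm (Fin n) → Prop) :
    countPerm n P = countPerm n (fun σ ↦ P σ ∧ Q σ) + countPerm n (fun σ ↦ P σ ∧ ¬ Q σ) := by
  classical
  simp only [countPerm, Nat.card_eq_fintype_card, Fintype.card_subtype]
  simp only [← Finset.filter_filter, Finset.card_filter_add_card_filter_not]

lemma countPerm_succ (P : Perm (Fin (n + 1)) → Prop) :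
    countPerm (n + 1) P = ∑ p, countPerm n fun σ ↦ P (insertMax p σ) := by
  simp only [countPerm, ← Nat.card_sigma]
  exact Nat.card_congr
    (((Equiv.ofBijective _ insertMax_bijective).subtypeEquiv fun _ ↦ Iff.rfl).symm.trans
    (Equiv.subtypeProdEquivSigmaSubtype fun p σ ↦ P (insertMax p σ)))

lemma countPerm_succ_eq_sum_range {P : Perm (Fin (n + 1)) → Prop} {g : ℕ → ℕ}
    (h : ∀ p, countPerm n (fun σ ↦ P (insertMax p σ)) = g p) :
    countPerm (n + 1) P = ∑ p ∈ Finset.range (n + 1), g p := by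
  simp only [countPerm_succ, h, Fin.sum_univ_eq_sum_range]

lemma countPerm_succ_eq_add_sum {P : Perm (Fin (n + 1)) → Prop} {a c : ℕ} {s : Finset ℕ}
    {g : ℕ → ℕ} (han : a ≤ n) (hsn : ∀ p ∈ s, p ≤ n) (has : a ∉ s)
    (ha : ∀ p : Fin (n + 1), (p : ℕ) = a → countPerm n (fun σ ↦ P (insertMax p σ)) = c)
    (hs : ∀ p : Fin (n + 1), (p : ℕ) ∈ s → countPerm n (fun σ ↦ P (insertMax p σ)) = g p)
    (hP : ∀ p : Fin (n + 1), (p : ℕ) ≠ a → (p : ℕ) ∉ s → ∀ σ, ¬ P (insertMax p σ)) :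
    countPerm (n + 1) P = c + ∑ p ∈ s, g p := by
  have hsub : insert a s ⊆ Finset.range (n + 1) := by
    intro p hp
    grind
  rw [countPerm_succ_eq_sum_range
      (g := fun p ↦ if p ∈ insert a s then if p = a then c else g p else 0),
    Finset.sum_ite_mem, Finset.inter_eq_right.2 hsub, Finset.sum_insert has, if_pos rfl]
  · congr 1
    exact Finset.sum_congr rfl fun p hp ↦ if_neg (ne_of_mem_of_not_mem hp has)
  · intro p
    have hzero := fun hpa hps ↦ countPerm_eq_zero (hP p hpa hps)
    grind

lemma countPerm_succ_eq_of_unique {P : Perm (Fin (n + 1)) → Prop} {Q : Perm (Fin n) → Prop} {a : ℕ}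
    (han : a ≤ n) (ha : ∀ p : Fin (n + 1), (p : ℕ) = a → ∀ σ, P (insertMax p σ) ↔ Q σ)
    (hP : ∀ p : Fin (n + 1), (p : ℕ) ≠ a → ∀ σ, ¬ P (insertMax p σ)) :
    countPerm (n + 1) P = countPerm n Q := by
  simpa using countPerm_succ_eq_add_sum (s := ∅) (g := 0) han (by simp) (by simp)
    (fun p hp ↦ countPerm_congr (ha p hp)) (by simp) (fun p hp _ ↦ hP p hp)

/-! ### Avoidance conditions relative to a position -/

variable {p : Fin (n + 1)} {σ : Perm (Fin n)} {k l m r s : ℕ}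

/-- The letters at positions in `[l, r)` decrease. -/
def DecreasingOn (l r : ℕ) (σ : Perm (Fin n)) : Prop :=
  ∀ i j : Fin n, l ≤ i → i < j → (j : ℕ) < r → σ j < σ i

/-- Every letter at a position in `[l, m)` exceeds every letter at a position in `[m, r)`. -/
def Dominates (l m r : ℕ) (σ : Perm (Fin n)) : Prop :=
  ∀ i j : Fin n, l ≤ i → (i : ℕ) < m → m ≤ j → (j : ℕ) < r → σ j < σ i

/-- Each of the first `l` letters is smaller than every letter from position `m` on. -/
def PrefixBelow (l m : ℕ) (σ : Perm (Fin n)) : Prop :=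
  ∀ i j : Fin n, (i : ℕ) < l → m ≤ j → σ i < σ j

/-- No occurrence of `123` has exactly its first letter before position `m`. Here and below, a bar
in a name marks where a position parameter cuts the occurrence: deleting the largest letter of a
pattern leaves a bar in its place. -/
def Avoids1Bar23 (m : ℕ) (σ : Perm (Fin n)) : Prop :=
  ∀ i j k : Fin n, (i : ℕ) < m → m ≤ j → j < k → ¬ (σ i < σ j ∧ σ j < σ k)

/-- No occurrence of `231` among the first `r` letters has exactly its first two letters before
position `m`. -/
def Avoids23Bar1 (m r : ℕ) (σ : Perm (Fin n)) : Prop :=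
  ∀ i j k : Fin n, i < j → (j : ℕ) < m → m ≤ k → (k : ℕ) < r → ¬ (σ k < σ i ∧ σ i < σ j)

/-- No occurrence of `312` among the first `r` letters has exactly its first two letters before
position `m`. -/
def Avoids31Bar2 (m r : ℕ) (σ : Perm (Fin n)) : Prop :=
  ∀ i j k : Fin n, i < j → (j : ℕ) < m → m ≤ k → (k : ℕ) < r → ¬ (σ j < σ k ∧ σ k < σ i)

/-- No occurrence of `1423` has exactly its first three letters before position `m`. -/
def Avoids142Bar3 (m : ℕ) (σ : Perm (Fin n)) : Prop :=
  ∀ i j k l : Fin n, i < j → j < k → (k : ℕ) < m → m ≤ l →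
    ¬ (σ i < σ k ∧ σ k < σ l ∧ σ l < σ j)

/-- No occurrence of `123` has its letters in `[0, s)`, `[s, m)` and `[m, n)` respectively. -/
def Avoids1Bar2Bar3 (s m : ℕ) (σ : Perm (Fin n)) : Prop :=
  ∀ i j k : Fin n, (i : ℕ) < s → s ≤ j → (j : ℕ) < m → m ≤ k → ¬ (σ i < σ j ∧ σ j < σ k)

/-- The first `m` letters avoid `312`. -/
def PrefixAvoids312 (m : ℕ) (σ : Perm (Fin n)) : Prop :=
  ∀ i j k : Fin n, i < j → j < k → (k : ℕ) < m → ¬ (σ j < σ k ∧ σ k < σ i)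

/-- The first `m` letters avoid `2341`. -/
def PrefixAvoids2341 (m : ℕ) (σ : Perm (Fin n)) : Prop :=
  ∀ i j k l : Fin n, i < j → j < k → k < l → (l : ℕ) < m →
    ¬ (σ l < σ i ∧ σ i < σ j ∧ σ j < σ k)

/-- The permutation avoids `1423`, `2341` and `3124`. -/
def AvoidsT (σ : Perm (Fin n)) : Prop :=
  ∀ i j k l : Fin n, i < j → j < k → k < l →
    ¬ (σ i < σ k ∧ σ k < σ l ∧ σ l < σ j) ∧
    ¬ (σ l < σ i ∧ σ i < σ j ∧ σ j < σ k) ∧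
    ¬ (σ j < σ k ∧ σ k < σ i ∧ σ i < σ l)

lemma DecreasingOn.mono {l' r' : ℕ} (h : DecreasingOn l r σ) (hl : l ≤ l') (hr : r' ≤ r) :
    DecreasingOn l' r' σ :=
  fun i j hi hij hj ↦ h i j (hl.trans hi) hij (hj.trans_le hr)

lemma decreasingOn_iff_of_le (hlm : l ≤ m) (hmr : m ≤ r) :
    DecreasingOn l r σ ↔ DecreasingOn l m σ ∧ DecreasingOn m r σ ∧ Dominates l m r σ := by
  refine ⟨fun h ↦ ⟨h.mono le_rfl hmr, h.mono hlm le_rfl, ?_⟩, ?_⟩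
  · exact fun i j hi him hmj hj ↦ h i j hi (Fin.lt_def.2 (him.trans_le hmj)) hj
  · rintro ⟨hleft, hright, hdom⟩ i j hi hij hj
    obtain hjm | hmj := lt_or_ge (j : ℕ) m
    · exact hleft i j hi hij hjm
    obtain him | hmi := lt_or_ge (i : ℕ) m
    · exact hdom i j hi him hmj hj
    · exact hright i j hmi hij hj

lemma exists_lt_of_not_decreasingOn (h : ¬ DecreasingOn l r σ) :
    ∃ i j : Fin n, l ≤ i ∧ i < j ∧ (j : ℕ) < r ∧ σ i < σ j := by
  simp only [DecreasingOn, not_forall] at h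
  obtain ⟨i, j, hi, hij, hj, hlt⟩ := h
  exact ⟨i, j, hi, hij, hj, (lt_iff_not_lt σ hij.ne).2 hlt⟩

lemma DecreasingOn.prefixAvoids312 (h : DecreasingOn 0 m σ) : PrefixAvoids312 m σ :=
  fun _ j k _ hjk hk hσ ↦ (h j k (Nat.zero_le _) hjk hk).not_gt hσ.1

lemma DecreasingOn.prefixAvoids2341 (h : DecreasingOn 0 m σ) : PrefixAvoids2341 m σ :=
  fun _ j k _ _ hjk hkl hl hσ ↦
    (h j k (Nat.zero_le _) hjk (lt_trans hkl hl)).not_gt hσ.2.2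

lemma DecreasingOn.avoids23Bar1 (h : DecreasingOn 0 m σ) : Avoids23Bar1 m r σ :=
  fun i j _ hij hj _ _ hσ ↦ (h i j (Nat.zero_le _) hij hj).not_gt hσ.2

/-! ### Inserting a maximum -/

lemma decreasingOn_insertMax_of_le (h : r ≤ p) :
    DecreasingOn l r (insertMax p σ) ↔ DecreasingOn l r σ := by
  simp only [DecreasingOn, Fin.forall_iff_succAbove p, Fin.succAbove_lt_succAbove_iff,
    insertMax_succAbove_lt_succAbove_iff, insertMax_succAbove_lt_self, not_insertMax_self_lt]
  grind [val_succAbove]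

lemma decreasingOn_succ_insertMax_of_le (h : p ≤ l) :
    DecreasingOn (l + 1) (r + 1) (insertMax p σ) ↔ DecreasingOn l r σ := by
  simp only [DecreasingOn, Fin.forall_iff_succAbove p, Fin.succAbove_lt_succAbove_iff,
    insertMax_succAbove_lt_succAbove_iff, insertMax_succAbove_lt_self, not_insertMax_self_lt]
  grind [val_succAbove]

lemma decreasingOn_succ_insertMax_of_eq (hp : p = l) (h : l ≤ r) :
    DecreasingOn l (r + 1) (insertMax p σ) ↔ DecreasingOn l r σ := by
  simp only [DecreasingOn, Fin.forall_iff_succAbove p, Fin.succAbove_lt_succAbove_iff,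
    insertMax_succAbove_lt_succAbove_iff, insertMax_succAbove_lt_self, not_insertMax_self_lt]
  grind [val_succAbove]

lemma not_decreasingOn_insertMax (hl : l < p) (hr : p < r) :
    ¬ DecreasingOn l r (insertMax p σ) := fun h ↦
  not_insertMax_self_lt (h ⟨l, by lia⟩ p le_rfl hl hr)

lemma prefixBelow_insertMax_of_le (hs : s ≤ p) (hm : m ≤ p) :
    PrefixBelow s m (insertMax p σ) ↔ PrefixBelow s m σ := by
  simp only [PrefixBelow, Fin.forall_iff_succAbove p, insertMax_succAbove_lt_succAbove_iff,
    insertMax_succAbove_lt_self, not_insertMax_self_lt]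
  grind [val_succAbove]

lemma prefixBelow_succ_insertMax (h : p ≤ m) (hs : s ≤ p) :
    PrefixBelow s (m + 1) (insertMax p σ) ↔ PrefixBelow s m σ := by
  simp only [PrefixBelow, Fin.forall_iff_succAbove p, insertMax_succAbove_lt_succAbove_iff,
    insertMax_succAbove_lt_self, not_insertMax_self_lt]
  grind [val_succAbove]

lemma not_prefixBelow_insertMax (hl : p < l) (hm : m ≤ n) :
    ¬ PrefixBelow l m (insertMax p σ) := fun h ↦
  not_insertMax_self_lt (h p (Fin.last n) hl hm)

lemma prefixAvoids312_insertMax_of_le (h : m ≤ p) :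
    PrefixAvoids312 m (insertMax p σ) ↔ PrefixAvoids312 m σ := by
  simp only [PrefixAvoids312, Fin.forall_iff_succAbove p, Fin.succAbove_lt_succAbove_iff,
    insertMax_succAbove_lt_succAbove_iff, insertMax_succAbove_lt_self, not_insertMax_self_lt]
  grind [val_succAbove]

lemma prefixAvoids312_succ_insertMax (h : p ≤ m) :
    PrefixAvoids312 (m + 1) (insertMax p σ) ↔ PrefixAvoids312 m σ ∧ DecreasingOn p m σ := by
  simp only [PrefixAvoids312, DecreasingOn, Fin.forall_iff_succAbove p,
    Fin.succAbove_lt_succAbove_iff, insertMax_succAbove_lt_succAbove_iff,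
    insertMax_succAbove_lt_self, not_insertMax_self_lt]
  grind [val_succAbove, lt_iff_not_lt]

lemma prefixAvoids2341_insertMax_of_le (h : m ≤ p) :
    PrefixAvoids2341 m (insertMax p σ) ↔ PrefixAvoids2341 m σ := by
  simp only [PrefixAvoids2341, Fin.forall_iff_succAbove p, Fin.succAbove_lt_succAbove_iff,
    insertMax_succAbove_lt_succAbove_iff, insertMax_succAbove_lt_self, not_insertMax_self_lt]
  grind [val_succAbove]

lemma prefixAvoids2341_succ_insertMax (h : p ≤ m) :
    PrefixAvoids2341 (m + 1) (insertMax p σ) ↔ PrefixAvoids2341 m σ ∧ Avoids23Bar1 p m σ := by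
  simp only [PrefixAvoids2341, Avoids23Bar1, Fin.forall_iff_succAbove p,
    Fin.succAbove_lt_succAbove_iff, insertMax_succAbove_lt_succAbove_iff,
    insertMax_succAbove_lt_self, not_insertMax_self_lt]
  grind [val_succAbove, lt_iff_not_lt]

lemma avoids1Bar23_insertMax (h : m ≤ p) :
    Avoids1Bar23 m (insertMax p σ) ↔ Avoids1Bar23 m σ ∧ Dominates 0 m p σ := by
  simp only [Avoids1Bar23, Dominates, Fin.forall_iff_succAbove p, Fin.succAbove_lt_succAbove_iff,
    insertMax_succAbove_lt_succAbove_iff, insertMax_succAbove_lt_self, not_insertMax_self_lt]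
  grind [val_succAbove, lt_iff_not_lt]

lemma avoids1Bar23_succ_insertMax_of_eq_zero (hp : (p : ℕ) = 0) :
    Avoids1Bar23 (m + 1) (insertMax p σ) ↔ Avoids1Bar23 m σ := by
  simp only [Avoids1Bar23, Fin.forall_iff_succAbove p, Fin.succAbove_lt_succAbove_iff,
    insertMax_succAbove_lt_succAbove_iff, insertMax_succAbove_lt_self, not_insertMax_self_lt]
  grind [val_succAbove]

lemma avoids23Bar1_insertMax_of_le (h : r ≤ p) :
    Avoids23Bar1 m r (insertMax p σ) ↔ Avoids23Bar1 m r σ := by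
  simp only [Avoids23Bar1, Fin.forall_iff_succAbove p, Fin.succAbove_lt_succAbove_iff,
    insertMax_succAbove_lt_succAbove_iff, insertMax_succAbove_lt_self, not_insertMax_self_lt]
  grind [val_succAbove]

lemma avoids23Bar1_succ_insertMax (h : p ≤ m) :
    Avoids23Bar1 (m + 1) (n + 1) (insertMax p σ) ↔ Avoids23Bar1 m n σ ∧ PrefixBelow p m σ := by
  simp only [Avoids23Bar1, PrefixBelow, Fin.forall_iff_succAbove p, Fin.succAbove_lt_succAbove_iff,
    insertMax_succAbove_lt_succAbove_iff, insertMax_succAbove_lt_self, not_insertMax_self_lt]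
  grind [val_succAbove, lt_iff_not_lt]

lemma avoids23Bar1_succ_insertMax_of_eq (hp : p = s) :
    Avoids23Bar1 s (r + 1) (insertMax p σ) ↔ Avoids23Bar1 s r σ := by
  simp only [Avoids23Bar1, Fin.forall_iff_succAbove p, Fin.succAbove_lt_succAbove_iff,
    insertMax_succAbove_lt_succAbove_iff, insertMax_succAbove_lt_self, not_insertMax_self_lt]
  grind [val_succAbove]

lemma avoids31Bar2_succ_insertMax (h : p ≤ m) :
    Avoids31Bar2 (m + 1) (n + 1) (insertMax p σ) ↔ Avoids31Bar2 m n σ ∧ Dominates p m n σ := by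
  simp only [Avoids31Bar2, Dominates, Fin.forall_iff_succAbove p, Fin.succAbove_lt_succAbove_iff,
    insertMax_succAbove_lt_succAbove_iff, insertMax_succAbove_lt_self, not_insertMax_self_lt]
  grind [val_succAbove, lt_iff_not_lt]

lemma avoids31Bar2_succ_insertMax_of_eq (hp : p = s) :
    Avoids31Bar2 s (r + 1) (insertMax p σ) ↔ Avoids31Bar2 s r σ := by
  simp only [Avoids31Bar2, Fin.forall_iff_succAbove p, Fin.succAbove_lt_succAbove_iff,
    insertMax_succAbove_lt_succAbove_iff, insertMax_succAbove_lt_self, not_insertMax_self_lt]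
  grind [val_succAbove]

lemma avoids142Bar3_insertMax_of_eq (hp : p = m) :
    Avoids142Bar3 m (insertMax p σ) ↔ Avoids142Bar3 m σ := by
  simp only [Avoids142Bar3, Fin.forall_iff_succAbove p, Fin.succAbove_lt_succAbove_iff,
    insertMax_succAbove_lt_succAbove_iff, insertMax_succAbove_lt_self, not_insertMax_self_lt]
  grind [val_succAbove]

lemma avoids142Bar3_succ_insertMax (h : p ≤ m) :
    Avoids142Bar3 (m + 1) (insertMax p σ) ↔ Avoids142Bar3 m σ ∧ Avoids1Bar2Bar3 p m σ := by
  simp only [Avoids142Bar3, Avoids1Bar2Bar3, Fin.forall_iff_succAbove p,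
    Fin.succAbove_lt_succAbove_iff, insertMax_succAbove_lt_succAbove_iff,
    insertMax_succAbove_lt_self, not_insertMax_self_lt, succAbove_lt_self_iff,
    self_lt_succAbove_iff, lt_irrefl, false_and, and_false, not_false_eq_true, implies_true,
    true_and, and_true, forall_and]
  grind [val_succAbove]

lemma avoids1Bar2Bar3_insertMax_of_eq (hp : p = m) :
    Avoids1Bar2Bar3 s m (insertMax p σ) ↔ Dominates 0 s m σ := by
  simp only [Avoids1Bar2Bar3, Dominates, Fin.forall_iff_succAbove p,
    insertMax_succAbove_lt_succAbove_iff, insertMax_succAbove_lt_self, not_insertMax_self_lt]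
  grind [val_succAbove, lt_iff_not_lt]

lemma avoids1Bar2Bar3_succ_insertMax_of_eq (hp : p = s) (h : s ≤ m) :
    Avoids1Bar2Bar3 s (m + 1) (insertMax p σ) ↔ Avoids1Bar2Bar3 s m σ := by
  simp only [Avoids1Bar2Bar3, Fin.forall_iff_succAbove p,
    insertMax_succAbove_lt_succAbove_iff, insertMax_succAbove_lt_self, not_insertMax_self_lt]
  grind [val_succAbove]

lemma avoidsT_insertMax :
    AvoidsT (insertMax p σ) ↔
      AvoidsT σ ∧ Avoids1Bar23 p σ ∧ Avoids23Bar1 p n σ ∧ PrefixAvoids312 p σ := by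
  simp only [AvoidsT, Avoids1Bar23, Avoids23Bar1, PrefixAvoids312, Fin.forall_iff_succAbove p,
    Fin.succAbove_lt_succAbove_iff, insertMax_succAbove_lt_succAbove_iff,
    insertMax_succAbove_lt_self, not_insertMax_self_lt]
  grind [val_succAbove]

/-! ### Prefixes avoiding `312` and `2341` -/

/-- The first `m` letters avoid `312` and `2341`, as they must in a `T`-avoider with a larger letter
further right. -/
def PrefixAvoids (m : ℕ) (σ : Perm (Fin n)) : Prop :=
  PrefixAvoids312 m σ ∧ PrefixAvoids2341 m σ

/-- Inserting a new maximum at position `s ≤ r` gives a prefix of length `r + 1` that avoids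
`312` and `2341` (see `prefixAvoids_succ_insertMax`). -/
def Insertable (s r : ℕ) (σ : Perm (Fin n)) : Prop :=
  PrefixAvoids s σ ∧ DecreasingOn s r σ ∧ Avoids31Bar2 s r σ ∧ Avoids23Bar1 s r σ

/-- The permutation is the direct sum of its first `m` letters and a decreasing permutation: the
letters from position `m` on decrease and all exceed the first `m`. -/
def SumDecreasing (m : ℕ) (σ : Perm (Fin n)) : Prop :=
  DecreasingOn m n σ ∧ PrefixBelow m m σ

lemma DecreasingOn.prefixAvoids (h : DecreasingOn 0 m σ) : PrefixAvoids m σ :=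
  ⟨h.prefixAvoids312, h.prefixAvoids2341⟩

lemma prefixAvoids_insertMax_of_le (h : m ≤ p) :
    PrefixAvoids m (insertMax p σ) ↔ PrefixAvoids m σ := by
  rw [PrefixAvoids, prefixAvoids312_insertMax_of_le h, prefixAvoids2341_insertMax_of_le h,
    PrefixAvoids]

lemma insertable_iff (h : s ≤ r) :
    Insertable s r σ ↔ PrefixAvoids r σ ∧ DecreasingOn s r σ ∧ Avoids23Bar1 s r σ := by
  have h312 : DecreasingOn s r σ →
      (PrefixAvoids312 s σ ∧ Avoids31Bar2 s r σ ↔ PrefixAvoids312 r σ) := by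
    grind only [DecreasingOn, PrefixAvoids312, Avoids31Bar2, Fin.lt_def]
  have h2341 : DecreasingOn s r σ → Avoids23Bar1 s r σ →
      (PrefixAvoids2341 s σ ↔ PrefixAvoids2341 r σ) := by
    grind only [DecreasingOn, PrefixAvoids2341, Avoids23Bar1, Fin.lt_def]
  grind only [Insertable, PrefixAvoids]

lemma DecreasingOn.insertable (h : DecreasingOn 0 m σ) (hsm : s ≤ m) : Insertable s m σ :=
  (insertable_iff hsm).2
    ⟨h.prefixAvoids, h.mono s.zero_le le_rfl, (h.mono le_rfl hsm).avoids23Bar1⟩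

lemma prefixAvoids_succ_insertMax (h : p ≤ m) :
    PrefixAvoids (m + 1) (insertMax p σ) ↔ Insertable p m σ := by
  rw [PrefixAvoids, prefixAvoids312_succ_insertMax h, prefixAvoids2341_succ_insertMax h,
    insertable_iff h, PrefixAvoids]
  tauto

lemma insertable_self_iff : Insertable m m σ ↔ PrefixAvoids m σ := by
  rw [insertable_iff le_rfl]
  grind only [DecreasingOn, Avoids23Bar1, Fin.lt_def]

lemma insertable_insertMax_of_le (hsr : s ≤ r) (h : r ≤ p) :
    Insertable s r (insertMax p σ) ↔ Insertable s r σ := by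
  rw [insertable_iff hsr, prefixAvoids_insertMax_of_le h, decreasingOn_insertMax_of_le h,
    avoids23Bar1_insertMax_of_le h, insertable_iff hsr]

lemma insertable_succ_insertMax_of_eq (hp : p = s) (h : s ≤ r) :
    Insertable s (r + 1) (insertMax p σ) ↔ Insertable s r σ := by
  rw [Insertable, prefixAvoids_insertMax_of_le hp.ge, decreasingOn_succ_insertMax_of_eq hp h,
    avoids31Bar2_succ_insertMax_of_eq hp, avoids23Bar1_succ_insertMax_of_eq hp, Insertable]

lemma not_insertable_insertMax (h : m < p) : ¬ Insertable m (n + 1) (insertMax p σ) :=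
  fun hins ↦ not_decreasingOn_insertMax h p.is_lt hins.2.1

lemma sumDecreasing_insertMax_of_eq (hp : p = m) :
    SumDecreasing m (insertMax p σ) ↔ SumDecreasing m σ := by
  rw [SumDecreasing, decreasingOn_succ_insertMax_of_eq hp (hp ▸ p.is_le),
    prefixBelow_insertMax_of_le hp.ge hp.ge, SumDecreasing]

lemma not_sumDecreasing_insertMax (hm : m ≤ n) (hpm : p ≠ m) :
    ¬ SumDecreasing m (insertMax p σ) := by
  rintro ⟨hdec, hbelow⟩
  obtain hlt | hgt := hpm.lt_or_gt
  · exact not_prefixBelow_insertMax hlt hm hbelow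
  · exact not_decreasingOn_insertMax hgt p.is_lt hdec

lemma sumDecreasing_iff (hsm : s ≤ m) (hmn : m < n) :
    SumDecreasing s σ ↔
      DecreasingOn s m σ ∧ DecreasingOn m n σ ∧ Dominates s m n σ ∧ PrefixBelow s m σ := by
  have hlast (hbelow : PrefixBelow s m σ) (hdom : Dominates s m n σ) : PrefixBelow s s σ := by
    intro i j hi hj
    obtain hjm | hmj := lt_or_ge (j : ℕ) m
    · exact (hbelow i ⟨m, hmn⟩ hi le_rfl).trans (hdom j ⟨m, hmn⟩ hj hjm le_rfl hmn)
    · exact hbelow i j hi hmj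
  rw [SumDecreasing, decreasingOn_iff_of_le hsm hmn.le]
  grind only [PrefixBelow]

lemma SumDecreasing.avoids31Bar2 (h : SumDecreasing s σ) (hsm : s ≤ m) :
    Avoids31Bar2 m r σ := by
  rintro i j k hij hj hk - ⟨hjk, hki⟩
  obtain hi | hi := lt_or_ge (i : ℕ) s
  · exact (h.2 i k hi (hsm.trans hk)).not_gt hki
  · have hlt : j < k := Fin.lt_def.2 (hj.trans_le hk)
    exact (h.1 j k (hi.trans (Fin.le_def.1 hij.le)) hlt k.is_lt).not_gt hjk

lemma SumDecreasing.avoids23Bar1 (h : SumDecreasing s σ) (hsm : s ≤ m) :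
    Avoids23Bar1 m r σ := by
  rintro i j k hij - hk - ⟨hki, hlt⟩
  obtain hi | hi := lt_or_ge (i : ℕ) s
  · exact (h.2 i k hi (hsm.trans hk)).not_gt hki
  · exact (h.1 i j hi hij j.is_lt).not_gt hlt

lemma insertable_succ_insertMax (h : p ≤ m) (hmn : m < n) :
    Insertable (m + 1) (n + 1) (insertMax p σ) ↔ PrefixAvoids p σ ∧ SumDecreasing p σ := by
  rw [Insertable, prefixAvoids_succ_insertMax h, decreasingOn_succ_insertMax_of_le h,
    avoids31Bar2_succ_insertMax h, avoids23Bar1_succ_insertMax h, Insertable,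
    sumDecreasing_iff h hmn]
  constructor
  · rintro ⟨⟨hp, hdec, -⟩, hdec', ⟨-, hdom⟩, -, hbelow⟩
    exact ⟨hp, hdec, hdec', hdom, hbelow⟩
  · rintro ⟨hp, hdec, hdec', hdom, hbelow⟩
    have hσ := (sumDecreasing_iff h hmn).2 ⟨hdec, hdec', hdom, hbelow⟩
    exact ⟨⟨hp, hdec, hσ.avoids31Bar2 le_rfl, hσ.avoids23Bar1 le_rfl⟩, hdec',
      ⟨hσ.avoids31Bar2 h, hdom⟩, hσ.avoids23Bar1 h, hbelow⟩

/-! ### Sites after a decreasing prefix -/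

/-- The first `k` letters decrease, and inserting a new maximum at position `k` gives a `T`-avoider
(see `descSite_iff`). -/
def DescSite (k : ℕ) (σ : Perm (Fin n)) : Prop :=
  AvoidsT σ ∧ DecreasingOn 0 k σ ∧ Avoids1Bar23 k σ

lemma descSite_iff : DescSite p σ ↔ AvoidsT (insertMax p σ) ∧ DecreasingOn 0 p σ := by
  rw [avoidsT_insertMax, DescSite]
  constructor
  · rintro ⟨hT, hdec, hbar⟩
    exact ⟨⟨hT, hbar, hdec.avoids23Bar1, hdec.prefixAvoids312⟩, hdec⟩
  · rintro ⟨⟨hT, hbar, -⟩, hdec⟩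
    exact ⟨hT, hdec, hbar⟩

lemma descSite_zero_iff : DescSite 0 σ ↔ AvoidsT σ := by
  simp [DescSite, DecreasingOn, Avoids1Bar23]

lemma descSite_succ_insertMax_of_eq_zero (hp : (p : ℕ) = 0) :
    DescSite (k + 1) (insertMax p σ) ↔ DescSite k σ := by
  have hbars : Avoids1Bar23 p σ ∧ Avoids23Bar1 p n σ ∧ PrefixAvoids312 p σ := by
    simp [Avoids23Bar1, Avoids1Bar23, PrefixAvoids312, hp]
  rw [DescSite, avoidsT_insertMax, avoids1Bar23_succ_insertMax_of_eq_zero hp,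
    decreasingOn_succ_insertMax_of_eq hp k.zero_le, and_iff_left hbars, DescSite]

lemma not_descSite_insertMax (h0 : 0 < (p : ℕ)) (hp : p < k) : ¬ DescSite k (insertMax p σ) :=
  fun h ↦ not_decreasingOn_insertMax h0 hp h.2.1

lemma PrefixAvoids312.decreasingOn_of_dominates (h : PrefixAvoids312 r σ) (hm : 0 < m)
    (hmr : m ≤ r) (hdec : DecreasingOn 0 m σ) (hdom : Dominates 0 m r σ) :
    DecreasingOn 0 r σ := by
  refine (decreasingOn_iff_of_le m.zero_le hmr).2 ⟨hdec, fun i j hi hij hj ↦ ?_, hdom⟩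
  refine (lt_iff_not_lt σ hij.ne').2 fun hlt ↦ ?_
  let first : Fin n := ⟨0, i.pos⟩
  have hfirst : σ j < σ first := hdom first j le_rfl hm (hi.trans hij.le) hj
  exact h first i j (Fin.lt_def.2 (hm.trans_le hi)) hij hj ⟨hlt, hfirst⟩

lemma descSite_insertMax (hk : 0 < k) (hp : k ≤ p) : DescSite k (insertMax p σ) ↔ DescSite p σ := by
  rw [descSite_iff, DescSite, decreasingOn_insertMax_of_le hp, avoids1Bar23_insertMax hp,
    avoidsT_insertMax]
  constructor
  · rintro ⟨hT, hdec, -, hdom⟩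
    exact ⟨hT, hT.2.2.2.decreasingOn_of_dominates hk hp hdec hdom⟩
  · rintro ⟨hT, hdec⟩
    obtain ⟨hdec', -, hdom⟩ := (decreasingOn_iff_of_le (Nat.zero_le k) hp).1 hdec
    refine ⟨hT, hdec', ?_, hdom⟩
    rintro i j l hi hj hjl ⟨hij, hjl'⟩
    obtain hjp | hpj := lt_or_ge (j : ℕ) p
    · exact (hdom i j (Nat.zero_le _) hi hj hjp).not_gt hij
    · exact hT.2.1 i j l (hi.trans_le hp) hpj hjl ⟨hij, hjl'⟩

/-! ### Sites after an ascent -/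

/-- The first `m` letters contain an ascent, and inserting a new maximum at position `m` gives a
`T`-avoider (see `ascSite_iff`). -/
def AscSite (m : ℕ) (σ : Perm (Fin n)) : Prop :=
  (PrefixAvoids m σ ∧ DecreasingOn m n σ ∧ Avoids23Bar1 m n σ ∧ Avoids142Bar3 m σ) ∧
    ¬ DecreasingOn 0 m σ

lemma AscSite.avoidsT (h : AscSite m σ) : AvoidsT σ := by
  obtain ⟨⟨⟨h312, h2341⟩, hdec, h231, h1423⟩, -⟩ := h
  grind only [AvoidsT, PrefixAvoids312, PrefixAvoids2341, DecreasingOn, Avoids23Bar1, Avoids142Bar3,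
    Fin.lt_def]

-- Later letters exceed the lower letter of an ascent before the site, so they must decrease.
lemma decreasingOn_of_avoids (h123 : Avoids1Bar23 m σ) (h231 : Avoids23Bar1 m n σ)
    (hm : ¬ DecreasingOn 0 m σ) : DecreasingOn m n σ := by
  obtain ⟨a, b, -, hab, hb, hlt⟩ := exists_lt_of_not_decreasingOn hm
  intro i j hi hij _
  have hai : σ a < σ i :=
    (lt_iff_not_lt σ (by grind)).2 fun hia ↦ h231 a b i hab hb hi i.is_lt ⟨hia, hlt⟩
  exact (lt_iff_not_lt σ hij.ne').2 fun hij' ↦ h123 a i j (lt_trans hab hb) hi hij ⟨hai, hij'⟩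

lemma ascSite_iff : AscSite p σ ↔ AvoidsT (insertMax p σ) ∧ ¬ DecreasingOn 0 p σ := by
  rw [avoidsT_insertMax]
  constructor
  · intro h
    obtain ⟨⟨hpre, hdec, h231, -⟩, hnot⟩ := id h
    refine ⟨⟨h.avoidsT, ?_, h231, hpre.1⟩, hnot⟩
    exact fun i j k _ hj hjk hlt ↦ (hdec j k hj hjk k.is_lt).not_gt hlt.2
  · rintro ⟨⟨hT, h123, h231, h312⟩, hnot⟩
    refine ⟨⟨⟨h312, ?_⟩, decreasingOn_of_avoids h123 h231 hnot, h231, ?_⟩, hnot⟩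
    · exact fun i j k l hij hjk hkl _ ↦ (hT i j k l hij hjk hkl).2.1
    · exact fun i j k l hij hjk hk hl ↦
        (hT i j k l hij hjk (Fin.lt_def.2 (hk.trans_le hl))).1

lemma not_ascSite_zero : ¬ AscSite 0 σ := fun h ↦ h.2 fun _ _ _ _ hj ↦ absurd hj (Nat.not_lt_zero _)

lemma ascSite_insertMax_of_eq (hp : p = m) : AscSite m (insertMax p σ) ↔ AscSite m σ := by
  rw [AscSite, prefixAvoids_insertMax_of_le hp.ge,
    decreasingOn_succ_insertMax_of_eq hp (hp ▸ p.is_le), avoids23Bar1_succ_insertMax_of_eq hp,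
    avoids142Bar3_insertMax_of_eq hp, decreasingOn_insertMax_of_le hp.ge, AscSite]

lemma not_ascSite_insertMax_of_lt (h : m < p) : ¬ AscSite m (insertMax p σ) :=
  fun hσ ↦ not_decreasingOn_insertMax h p.is_lt hσ.1.2.1

lemma not_ascSite_insertMax_of_eq_zero (hp : (p : ℕ) = 0) : ¬ AscSite (m + 1) (insertMax p σ) := by
  rintro ⟨⟨hpre, -⟩, hnot⟩
  rw [prefixAvoids_succ_insertMax (by lia), hp] at hpre
  exact hnot ((decreasingOn_succ_insertMax_of_eq hp m.zero_le).2 hpre.2.1)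

/-- Inserting a new maximum at position `s` gives a permutation in `AscSite (m + 1)`
(see `ascSite_succ_insertMax`). -/
def PairedSite (s m : ℕ) (σ : Perm (Fin n)) : Prop :=
  Insertable s m σ ∧ DecreasingOn m n σ ∧ PrefixBelow s m σ ∧ Avoids1Bar2Bar3 s m σ

lemma PairedSite.avoids23Bar1 (h : PairedSite s m σ) : Avoids23Bar1 m n σ := by
  obtain ⟨⟨-, hdec, -⟩, -, hbelow, -⟩ := h
  rintro i j k hij hj hk - ⟨hki, hlt⟩
  obtain hi | hi := lt_or_ge (i : ℕ) s
  · exact (hbelow i k hi hk).not_gt hki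
  · exact (hdec i j hi hij hj).not_gt hlt

lemma PairedSite.avoids142Bar3 (h : PairedSite s m σ) : Avoids142Bar3 m σ := by
  obtain ⟨⟨-, hdec, -⟩, -, hbelow, hbars⟩ := h
  rintro i j k l hij hjk hk hl ⟨hik, hkl, hlj⟩
  obtain hj | hj := lt_or_ge (j : ℕ) s
  · exact (hbelow j l hj hl).not_gt hlj
  obtain hi | hi := lt_or_ge (i : ℕ) s
  · exact hbars i k l hi (hj.trans hjk.le) hk hl ⟨hik, hkl⟩
  · exact (hdec i k hi (hij.trans hjk) hk).not_gt hik

lemma ascSite_succ_insertMax (hp : 0 < (p : ℕ)) (h : p ≤ m) :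
    AscSite (m + 1) (insertMax p σ) ↔ PairedSite p m σ := by
  rw [AscSite, prefixAvoids_succ_insertMax h, decreasingOn_succ_insertMax_of_le h,
    avoids23Bar1_succ_insertMax h, avoids142Bar3_succ_insertMax h,
    and_iff_left (not_decreasingOn_insertMax hp (Nat.lt_succ_of_le h))]
  constructor
  · rintro ⟨hins, hdec, ⟨-, hbelow⟩, -, hbars⟩
    exact ⟨hins, hdec, hbelow, hbars⟩
  · intro hσ
    obtain ⟨hins, hdec, hbelow, hbars⟩ := id hσ
    exact ⟨hins, hdec, ⟨hσ.avoids23Bar1, hbelow⟩, hσ.avoids142Bar3, hbars⟩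

lemma pairedSite_self_iff : PairedSite s s σ ↔ PrefixAvoids s σ ∧ SumDecreasing s σ := by
  have hbars : Avoids1Bar2Bar3 s s σ := fun _ _ _ _ hj hj' ↦ absurd hj hj'.not_ge
  rw [PairedSite, insertable_self_iff, and_iff_left hbars, SumDecreasing]

lemma pairedSite_succ_insertMax_of_eq (hp : p = s) (h : s ≤ m) :
    PairedSite s (m + 1) (insertMax p σ) ↔ PairedSite s m σ := by
  rw [PairedSite, insertable_succ_insertMax_of_eq hp h,
    decreasingOn_succ_insertMax_of_le (hp.trans_le h),
    prefixBelow_succ_insertMax (hp.trans_le h) hp.ge,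
    avoids1Bar2Bar3_succ_insertMax_of_eq hp h, PairedSite]

lemma not_pairedSite_insertMax (hm : m ≤ n) (hps : p ≠ s) (hpm : p ≠ m) :
    ¬ PairedSite s m (insertMax p σ) := by
  rintro ⟨⟨-, hdec, -⟩, hdec', hbelow, -⟩
  obtain hlt | hgt := hps.lt_or_gt
  · exact not_prefixBelow_insertMax hlt hm hbelow
  obtain hlt' | hgt' := hpm.lt_or_gt
  · exact not_decreasingOn_insertMax hgt hlt' hdec
  · exact not_decreasingOn_insertMax hgt' p.is_lt hdec'

lemma Insertable.decreasingOn_of_dominates (h : Insertable s m σ) (hsm : s < m) (hmn : m ≤ n)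
    (hdom : Dominates 0 s m σ) : DecreasingOn 0 m σ := by
  obtain ⟨-, hdec, -, h231⟩ := h
  refine (decreasingOn_iff_of_le s.zero_le hsm.le).2 ⟨fun i j _ hij hj ↦ ?_, hdec, hdom⟩
  let mid : Fin n := ⟨s, hsm.trans_le hmn⟩
  have hmid : σ mid < σ i := hdom i mid (Nat.zero_le _) (lt_trans hij hj) le_rfl hsm
  exact (lt_iff_not_lt σ hij.ne').2 fun hlt ↦ h231 i j mid hij hj le_rfl hsm ⟨hmid, hlt⟩

lemma pairedSite_insertMax_of_eq (hs : 0 < s) (hsm : s < m) (hp : p = m) :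
    PairedSite s m (insertMax p σ) ↔ DecreasingOn 0 m σ ∧ SumDecreasing m σ := by
  have hmn : m ≤ n := hp ▸ p.is_le
  rw [PairedSite, insertable_insertMax_of_le hsm.le hp.ge,
    decreasingOn_succ_insertMax_of_eq hp hmn,
    prefixBelow_insertMax_of_le (hsm.le.trans hp.ge) hp.ge, avoids1Bar2Bar3_insertMax_of_eq hp]
  constructor
  · rintro ⟨hins, hdec, hbelow, hdom⟩
    refine ⟨hins.decreasingOn_of_dominates hsm hmn hdom, hdec, fun i j hi hj ↦ ?_⟩
    obtain his | hsi := lt_or_ge (i : ℕ) s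
    · exact hbelow i j his hj
    · let first : Fin n := ⟨0, i.pos⟩
      exact (hdom first i le_rfl hs hsi hi).trans (hbelow first j hs hj)
  · rintro ⟨hdec, hdec', hbelow⟩
    exact ⟨hdec.insertable hsm.le, hdec', fun i j hi ↦ hbelow i j (hi.trans hsm),
      ((decreasingOn_iff_of_le s.zero_le hsm.le).1 hdec).2.2⟩

/-! ### Recurrences -/

open Finset

lemma countPerm_and_sumDecreasing {C : ∀ {n}, Perm (Fin n) → Prop}
    (hC : ∀ {n} {p : Fin (n + 1)} {σ : Perm (Fin n)}, m ≤ p → (C (insertMax p σ) ↔ C σ))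
    (h : m ≤ n) : countPerm n (fun σ ↦ C σ ∧ SumDecreasing m σ) = countPerm m C := by
  induction n, h using Nat.le_induction with
  | base =>
    refine countPerm_congr fun σ ↦ and_iff_left ⟨?_, ?_⟩
    · exact fun i _ hi _ _ ↦ absurd i.is_lt hi.not_gt
    · exact fun _ j _ hj ↦ absurd j.is_lt hj.not_gt
  | succ n hmn ih =>
    rw [← ih]
    refine countPerm_succ_eq_of_unique hmn (fun p hp σ ↦ ?_) fun p hp σ h ↦ ?_
    · exact and_congr (hC hp.ge) (sumDecreasing_insertMax_of_eq hp)
    · exact not_sumDecreasing_insertMax hmn hp h.2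

lemma countPerm_decreasingOn (n : ℕ) : countPerm n (DecreasingOn 0 n) = 1 := by
  induction n with
  | zero => exact countPerm_zero fun σ i ↦ i.elim0
  | succ n ih =>
    refine (countPerm_succ_eq_of_unique n.zero_le (fun p hp σ ↦ ?_) fun p hp σ ↦ ?_).trans ih
    · exact decreasingOn_succ_insertMax_of_eq hp n.zero_le
    · exact not_decreasingOn_insertMax (Nat.pos_of_ne_zero hp) p.is_lt

lemma countPerm_decreasingOn_and_sumDecreasing (h : m ≤ n) :
    countPerm n (fun σ ↦ DecreasingOn 0 m σ ∧ SumDecreasing m σ) = 1 :=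
  (countPerm_and_sumDecreasing (C := DecreasingOn 0 m) decreasingOn_insertMax_of_le h).trans
    (countPerm_decreasingOn m)

/-- The number of permutations of length `n` avoiding `312` and `2341`. -/
noncomputable def prefixCount (n : ℕ) : ℕ := countPerm n (PrefixAvoids n)

lemma prefixCount_zero : prefixCount 0 = 1 :=
  countPerm_zero fun _ ↦ ⟨fun i ↦ i.elim0, fun i ↦ i.elim0⟩

lemma countPerm_prefixAvoids_and_sumDecreasing (h : m ≤ n) :
    countPerm n (fun σ ↦ PrefixAvoids m σ ∧ SumDecreasing m σ) = prefixCount m :=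
  countPerm_and_sumDecreasing (C := PrefixAvoids m) prefixAvoids_insertMax_of_le h

lemma countPerm_insertable_succ (h : s ≤ n) :
    countPerm (n + 1) (Insertable s (n + 1)) =
      countPerm n (Insertable s n) + ∑ q ∈ range s, prefixCount q := by
  refine countPerm_succ_eq_add_sum (a := s) h (by grind) (by simp) (fun p hp ↦ ?_)
    (fun p hp ↦ ?_) fun p hp hp' σ ↦ ?_
  · exact countPerm_congr fun σ ↦ insertable_succ_insertMax_of_eq hp h
  · obtain ⟨t, rfl⟩ : ∃ t, s = t + 1 := Nat.exists_eq_add_one.2 (by grind)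
    rw [← countPerm_prefixAvoids_and_sumDecreasing p.is_le]
    exact countPerm_congr fun σ ↦ insertable_succ_insertMax (by grind) h
  · exact not_insertable_insertMax (by grind)

lemma countPerm_insertable (h : s ≤ n) :
    countPerm n (Insertable s n) = prefixCount s + (n - s) * ∑ q ∈ range s, prefixCount q := by
  induction n, h using Nat.le_induction with
  | base => simpa [prefixCount] using countPerm_congr fun _ ↦ insertable_self_iff
  | succ n hsn ih => rw [countPerm_insertable_succ hsn, ih, Nat.sub_add_comm hsn]; ring

lemma prefixCount_succ (n : ℕ) :
    prefixCount (n + 1) =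
      ∑ x ∈ antidiagonal n, (prefixCount x.1 + x.2 * ∑ q ∈ range x.1, prefixCount q) := by
  rw [Nat.sum_antidiagonal_eq_sum_range_succ_mk]
  refine countPerm_succ_eq_sum_range fun p ↦ ?_
  rw [← countPerm_insertable p.is_le]
  exact countPerm_congr fun σ ↦ prefixAvoids_succ_insertMax p.is_le

lemma countPerm_pairedSite_succ (hs : 0 < s) (hsm : s ≤ m) (hmn : m < n) :
    countPerm (n + 1) (PairedSite s (m + 1)) = countPerm n (PairedSite s m) + 1 := by
  refine countPerm_succ_eq_add_sum (a := s) (s := {m + 1}) (g := 1) (hsm.trans hmn.le)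
    (by simpa using hmn) (by simpa using (Nat.lt_succ_of_le hsm).ne) (fun p hp ↦ ?_)
    (fun p hp ↦ ?_) fun p hps hpm σ ↦ ?_
  · exact countPerm_congr fun σ ↦ pairedSite_succ_insertMax_of_eq hp hsm
  · exact (countPerm_congr fun σ ↦ pairedSite_insertMax_of_eq hs (Nat.lt_succ_of_le hsm)
      (mem_singleton.1 hp)).trans (countPerm_decreasingOn_and_sumDecreasing hmn)
  · exact not_pairedSite_insertMax hmn hps (notMem_singleton.1 hpm)

lemma countPerm_pairedSite (hs : 0 < s) (hsm : s ≤ m) (hmn : m < n) :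
    countPerm n (PairedSite s m) = prefixCount s + (m - s) := by
  induction m, hsm using Nat.le_induction generalizing n with
  | base =>
    rw [tsub_self, add_zero, ← countPerm_prefixAvoids_and_sumDecreasing hmn.le]
    exact countPerm_congr fun _ ↦ pairedSite_self_iff
  | succ m hsm ih =>
    obtain ⟨n, rfl⟩ : ∃ n', n = n' + 1 := Nat.exists_eq_add_one.2 (by lia)
    rw [countPerm_pairedSite_succ hs hsm (by lia), ih (by lia), Nat.sub_add_comm hsm, add_assoc]

/-- The number of pairs of `s ∈ [1, m]` and a permutation of length `n` in `PairedSite s m`. It does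
not depend on `n > m` (see `countPerm_pairedSite`). -/
noncomputable def pairedSiteTotal (m : ℕ) : ℕ := ∑ s ∈ Icc 1 m, (prefixCount s + (m - s))

lemma pairedSiteTotal_succ (m : ℕ) :
    pairedSiteTotal (m + 1) = ∑ x ∈ antidiagonal m, (prefixCount (x.1 + 1) + x.2) := by
  rw [pairedSiteTotal, Nat.sum_antidiagonal_eq_sum_range_succ_mk, range_eq_Ico,
    ← Ico_add_one_right_eq_Icc, ← sum_Ico_add' _ 0 (m + 1) 1]
  simp

/-- The number of permutations of length `n` in `AscSite m`. -/
noncomputable def ascSiteCount (n m : ℕ) : ℕ := countPerm n (AscSite m)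

lemma ascSiteCount_zero (n : ℕ) : ascSiteCount n 0 = 0 :=
  countPerm_eq_zero fun _ ↦ not_ascSite_zero

lemma ascSiteCount_self_add_one (n : ℕ) : ascSiteCount n n + 1 = prefixCount n := by
  rw [prefixCount, countPerm_eq_add_not _ (DecreasingOn 0 n), add_comm, ← countPerm_decreasingOn n]
  congr 1
  · exact countPerm_congr fun σ ↦ (and_iff_right_of_imp DecreasingOn.prefixAvoids).symm
  · refine countPerm_congr fun σ ↦ and_congr_left' (and_iff_left ⟨?_, ?_, ?_⟩)
    · exact fun i _ hi _ _ ↦ absurd i.is_lt hi.not_gt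
    · exact fun _ _ k _ _ hk ↦ absurd k.is_lt hk.not_gt
    · exact fun _ _ _ l _ _ _ hl ↦ absurd l.is_lt hl.not_gt

lemma ascSiteCount_succ_succ (h : m < n) :
    ascSiteCount (n + 1) (m + 1) = ascSiteCount n (m + 1) + pairedSiteTotal m := by
  refine countPerm_succ_eq_add_sum (a := m + 1) h (by grind) (by simp) (fun p hp ↦ ?_)
    (fun p hp ↦ ?_) fun p hp hp' σ ↦ ?_
  · exact countPerm_congr fun σ ↦ ascSite_insertMax_of_eq hp
  · obtain ⟨hp0, hpm⟩ := mem_Icc.1 hp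
    rw [← countPerm_pairedSite hp0 hpm h]
    exact countPerm_congr fun σ ↦ ascSite_succ_insertMax hp0 hpm
  · obtain hp0 | hp0 := Nat.eq_zero_or_pos (p : ℕ)
    · exact not_ascSite_insertMax_of_eq_zero hp0
    · exact not_ascSite_insertMax_of_lt (by grind)

lemma ascSiteCount_succ_add_one (h : m ≤ n) :
    ascSiteCount (n + 1) (m + 1) + 1 = prefixCount (m + 1) + (n - m) * pairedSiteTotal m := by
  induction n, h using Nat.le_induction with
  | base => simp [ascSiteCount_self_add_one]
  | succ n hmn ih =>
    rw [ascSiteCount_succ_succ (Nat.lt_succ_of_le hmn), add_right_comm, ih, Nat.sub_add_comm hmn]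
    ring

/-- The number of pairs of `p ∈ [0, n]` and a permutation of length `n` in `AscSite p`. -/
noncomputable def ascSiteTotal (n : ℕ) : ℕ := ∑ p ∈ range (n + 1), ascSiteCount n p

lemma ascSiteTotal_zero : ascSiteTotal 0 = 0 := by
  simp [ascSiteTotal, ascSiteCount_zero]

lemma ascSiteTotal_succ_add (n : ℕ) :
    ascSiteTotal (n + 1) + (n + 1) =
      ∑ x ∈ antidiagonal n, (prefixCount (x.1 + 1) + pairedSiteTotal x.1 * x.2) := by
  rw [ascSiteTotal, sum_range_succ', ascSiteCount_zero, add_zero,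
    Nat.sum_antidiagonal_eq_sum_range_succ_mk]
  calc
    _ = ∑ m ∈ range (n + 1), (ascSiteCount (n + 1) (m + 1) + 1) := by simp [sum_add_distrib]
    _ = _ := sum_congr rfl fun m hm ↦ by
      rw [ascSiteCount_succ_add_one (Nat.lt_succ_iff.1 (mem_range.1 hm)), mul_comm]

/-- The number of `T`-avoiders of length `n`. -/
noncomputable def avoidsTCount (n : ℕ) : ℕ := countPerm n AvoidsT

lemma avoidsTCount_zero : avoidsTCount 0 = 1 := countPerm_zero fun _ i ↦ i.elim0

/-- The number of permutations of length `n` in `DescSite k`. -/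
noncomputable def descSiteCount (n k : ℕ) : ℕ := countPerm n (DescSite k)

lemma descSiteCount_zero (n : ℕ) : descSiteCount n 0 = avoidsTCount n :=
  countPerm_congr fun _ ↦ descSite_zero_iff

lemma descSiteCount_succ_succ (h : k ≤ n) :
    descSiteCount (n + 1) (k + 1) = ∑ p ∈ Ico k (n + 1), descSiteCount n p := by
  rw [sum_eq_sum_Ico_succ_bot (Nat.lt_succ_of_le h)]
  refine countPerm_succ_eq_add_sum (a := 0) n.zero_le (by grind) (by simp) (fun p hp ↦ ?_)
    (fun p hp ↦ ?_) fun p hp hp' σ ↦ ?_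
  · exact countPerm_congr fun σ ↦ descSite_succ_insertMax_of_eq_zero hp
  · exact countPerm_congr fun σ ↦ descSite_insertMax k.succ_pos (mem_Ico.1 hp).1
  · exact not_descSite_insertMax (Nat.pos_of_ne_zero hp) (by grind)

lemma avoidsTCount_succ (n : ℕ) :
    avoidsTCount (n + 1) = ∑ p ∈ range (n + 1), (descSiteCount n p + ascSiteCount n p) := by
  refine countPerm_succ_eq_sum_range fun p ↦ ?_
  rw [countPerm_eq_add_not _ (DecreasingOn 0 p)]
  exact congrArg₂ _ (countPerm_congr fun _ ↦ descSite_iff.symm)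
    (countPerm_congr fun _ ↦ ascSite_iff.symm)

/-! ### Generating functions -/

/-- The ordinary generating function of `a`, with coefficients in `ℚ`. -/
noncomputable def gf (a : ℕ → ℕ) : ℚ⟦X⟧ := PowerSeries.mk fun n ↦ (a n : ℚ)

lemma gf_eq_add_X_mul (a : ℕ → ℕ) : gf a = C (a 0 : ℚ) + X * gf fun n ↦ a (n + 1) := by
  conv_lhs => rw [eq_X_mul_shift_add_const (gf a), add_comm]
  simp [gf]

lemma gf_add (a b : ℕ → ℕ) : gf (fun n ↦ a n + b n) = gf a + gf b := by
  ext
  simp [gf]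

lemma gf_sum_antidiagonal (a b : ℕ → ℕ) :
    gf (fun n ↦ ∑ x ∈ antidiagonal n, a x.1 * b x.2) = gf a * gf b := by
  ext
  simp [gf, coeff_mul]

lemma one_sub_X_mul_gf_one : (1 - X) * gf 1 = 1 := by
  have hrec := gf_eq_add_X_mul 1
  simp only [Pi.one_apply, Nat.cast_one, map_one] at hrec
  linear_combination hrec

lemma one_sub_X_mul_gf_sum_range (a : ℕ → ℕ) :
    (1 - X) * gf (fun n ↦ ∑ k ∈ range n, a k) = X * gf a := by
  have hrec := gf_eq_add_X_mul fun n ↦ ∑ k ∈ range n, a k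
  simp only [sum_range_succ, gf_add, range_zero, sum_empty, Nat.cast_zero, map_zero] at hrec
  linear_combination hrec

lemma one_sub_X_sq_mul_gf_id : (1 - X) ^ 2 * gf (fun n ↦ n) = X := by
  have hsum := one_sub_X_mul_gf_sum_range 1
  simp only [Pi.one_apply, sum_const, card_range, smul_eq_mul, mul_one] at hsum
  linear_combination (1 - X) * hsum + X * one_sub_X_mul_gf_one

lemma gf_prefixCount_eq : gf prefixCount = 1 + X * gf fun n ↦ prefixCount (n + 1) := by
  simpa [prefixCount_zero] using gf_eq_add_X_mul prefixCount

lemma gf_prefixCount_succ : gf (fun n ↦ prefixCount (n + 1)) =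
    gf prefixCount * gf 1 + gf (fun n ↦ ∑ q ∈ range n, prefixCount q) * gf fun n ↦ n := by
  simp only [← gf_sum_antidiagonal, ← gf_add, ← sum_add_distrib]
  congr! 2 with n
  rw [prefixCount_succ]
  refine sum_congr rfl fun x _ ↦ ?_
  simp only [Pi.one_apply]
  ring

lemma mul_gf_prefixCount :
    (1 - 4 * X + 5 * X ^ 2 - 3 * X ^ 3) * gf prefixCount = (1 - X) ^ 3 := by
  have hsums := one_sub_X_mul_gf_sum_range prefixCount
  linear_combination (1 - X) ^ 3 * gf_prefixCount_eq + X * (1 - X) ^ 3 * gf_prefixCount_succ +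
    X * (1 - X) ^ 2 * gf prefixCount * one_sub_X_mul_gf_one +
    X * (1 - X) * gf (fun n ↦ ∑ q ∈ range n, prefixCount q) * one_sub_X_sq_mul_gf_id +
    X ^ 2 * hsums

lemma gf_pairedSiteTotal :
    gf pairedSiteTotal = X * (gf (fun n ↦ prefixCount (n + 1)) * gf 1 + gf 1 * gf fun n ↦ n) := by
  have hzero : pairedSiteTotal 0 = 0 := rfl
  rw [gf_eq_add_X_mul, hzero, Nat.cast_zero, map_zero, zero_add]
  simp only [pairedSiteTotal_succ, ← gf_sum_antidiagonal, ← gf_add, ← sum_add_distrib,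
    Pi.one_apply, mul_one, one_mul]

lemma mul_gf_pairedSiteTotal :
    (1 - X) ^ 3 * gf pairedSiteTotal =
      X * ((1 - X) ^ 2 * gf (fun n ↦ prefixCount (n + 1)) + X) := by
  linear_combination (1 - X) ^ 3 * gf_pairedSiteTotal +
    X * (1 - X) ^ 2 * (gf (fun n ↦ prefixCount (n + 1)) + gf fun n ↦ n) * one_sub_X_mul_gf_one +
    X * one_sub_X_sq_mul_gf_id

lemma gf_ascSiteTotal : gf ascSiteTotal + X * gf 1 ^ 2 =
    X * (gf (fun n ↦ prefixCount (n + 1)) * gf 1 + gf pairedSiteTotal * gf fun n ↦ n) := by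
  have hrec := gf_eq_add_X_mul ascSiteTotal
  rw [ascSiteTotal_zero, Nat.cast_zero, map_zero, zero_add] at hrec
  rw [hrec, ← mul_add, sq]
  simp only [← gf_sum_antidiagonal, ← gf_add, ← sum_add_distrib]
  congr! 3 with n
  simpa using ascSiteTotal_succ_add n

lemma mul_gf_ascSiteTotal :
    (1 - X) ^ 5 * gf ascSiteTotal =
      X * ((1 - X) ^ 4 * gf (fun n ↦ prefixCount (n + 1)) +
        X * (1 - X) ^ 3 * gf pairedSiteTotal - (1 - X) ^ 3) := by
  linear_combination (1 - X) ^ 5 * gf_ascSiteTotal +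
    X * (1 - X) ^ 4 * gf (fun n ↦ prefixCount (n + 1)) * one_sub_X_mul_gf_one +
    X * (1 - X) ^ 3 * gf pairedSiteTotal * one_sub_X_sq_mul_gf_id -
    X * (1 - X) ^ 3 * ((1 - X) * gf 1 + 1) * one_sub_X_mul_gf_one

lemma mul_one_add_X_mul_gf_ascSiteTotal :
    (1 - X) ^ 5 * (1 - 4 * X + 5 * X ^ 2 - 3 * X ^ 3) * (1 + X * gf ascSiteTotal) =
      1 - 9 * X + 35 * X ^ 2 - 77 * X ^ 3 + 107 * X ^ 4 - 97 * X ^ 5 + 55 * X ^ 6 - 17 * X ^ 7 +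
        X ^ 8 := by
  linear_combination
    X * (1 - 4 * X + 5 * X ^ 2 - 3 * X ^ 3) *
      (mul_gf_ascSiteTotal + X ^ 2 * mul_gf_pairedSiteTotal) +
    X * (1 - X) ^ 2 * ((1 - X) ^ 2 + X ^ 2) *
      (mul_gf_prefixCount - (1 - 4 * X + 5 * X ^ 2 - 3 * X ^ 3) * gf_prefixCount_eq)

lemma catalanGF_eq : catalanGF = 1 + X * catalanGF ^ 2 := by
  have hsq := congrArg (PowerSeries.map (Nat.castRingHom ℚ)) catalanSeries_sq_mul_X_add_one
  have hmap : catalanSeries.map (Nat.castRingHom ℚ) = catalanGF := by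
    ext
    simp [catalanGF]
  rw [map_add, map_mul, map_pow, map_X, map_one, hmap] at hsq
  linear_combination -hsq

lemma descSiteCount_eq_coeff {n k : ℕ} (h : k ≤ n) :
    (descSiteCount n k : ℚ) = coeff n (gf avoidsTCount * (X * catalanGF) ^ k) := by
  induction n generalizing k with
  | zero =>
    obtain rfl := Nat.le_zero.1 h
    simp [gf, descSiteCount_zero]
  | succ n ih =>
    obtain _ | k := k
    · simp [gf, descSiteCount_zero]
    let g (p : ℕ) : ℚ := coeff (n + 1) (gf avoidsTCount * (X * catalanGF) ^ (p + 1))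
    have hstep (p : ℕ) (hp : p ≤ n) : (descSiteCount n p : ℚ) = g p - g (p + 1) := by
      rw [ih hp, ← coeff_succ_X_mul, ← map_sub]
      congr 1
      linear_combination -gf avoidsTCount * (X * catalanGF) ^ p * X * catalanGF_eq
    have hlast : g (n + 1) = 0 := by
      simp only [g]
      rw [mul_pow, mul_left_comm, coeff_X_pow_mul', if_neg (by lia)]
    calc
      (descSiteCount (n + 1) (k + 1) : ℚ) = ∑ p ∈ Ico k (n + 1), (descSiteCount n p : ℚ) := by
        rw [descSiteCount_succ_succ (by lia), Nat.cast_sum]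
      _ = ∑ p ∈ Ico k (n + 1), (g p - g (p + 1)) :=
        sum_congr rfl fun p hp ↦ hstep p (by grind)
      _ = g k - g (n + 1) := by
        simpa [neg_add_eq_sub] using sum_Ico_sub (fun p ↦ -g p) (show k ≤ n + 1 by lia)
      _ = g k := by rw [hlast, sub_zero]

lemma gf_avoidsTCount_eq :
    gf avoidsTCount = 1 + X * catalanGF * gf avoidsTCount + X * gf ascSiteTotal := by
  ext (_ | n)
  · simp [gf, avoidsTCount_zero, mul_assoc]
  · have hdesc := descSiteCount_eq_coeff (show 1 ≤ n + 1 by lia)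
    rw [descSiteCount_succ_succ n.zero_le, pow_one, mul_comm, ← range_eq_Ico] at hdesc
    rw [map_add, map_add, ← hdesc, coeff_succ_X_mul]
    simp [gf, avoidsTCount_succ, ascSiteTotal, sum_add_distrib, coeff_one]

lemma gf_avoidsTCount : gf avoidsTCount = catalanGF * (1 + X * gf ascSiteTotal) := by
  linear_combination catalanGF * gf_avoidsTCount_eq - gf avoidsTCount * catalanGF_eq

/-! ### Pattern containment -/

lemma containsPattern_four_iff {τ : Fin 4 → Fin 4} :
    ContainsPattern σ τ ↔ ∃ i j k l : Fin n, i < j ∧ j < k ∧ k < l ∧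
      ∀ a b, τ a < τ b ↔ σ (![i, j, k, l] a) < σ (![i, j, k, l] b) := by
  constructor
  · rintro ⟨f, hf⟩
    have hvec : ![f 0, f 1, f 2, f 3] = f := by
      ext a
      fin_cases a <;> rfl
    exact ⟨f 0, f 1, f 2, f 3, by simp, by simp, by simp, by rwa [hvec]⟩
  · rintro ⟨i, j, k, l, hij, hjk, hkl, h⟩
    have hmono : StrictMono ![i, j, k, l] := by
      rw [Fin.strictMono_iff_lt_succ]
      intro a
      fin_cases a <;> simpa
    exact ⟨OrderEmbedding.ofStrictMono _ hmono, h⟩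

lemma forall_not_containsPattern_iff_avoidsT :
    (∀ τ ∈ ({![0,3,1,2], ![1,2,3,0], ![2,0,1,3]} : Set (Fin 4 → Fin 4)), ¬ ContainsPattern σ τ) ↔
      AvoidsT σ := by
  simp only [Set.mem_insert_iff, Set.mem_singleton_iff, forall_eq_or_imp, forall_eq,
    containsPattern_four_iff, not_exists, not_and, AvoidsT, ← forall_and]
  congr! 7
  simp only [Nat.succ_eq_add_one, Nat.reduceAdd, Fin.isValue, Fin.forall_fin_succ,
    Matrix.cons_val_zero, not_lt_zero, false_iff, not_lt, Matrix.cons_val_succ, Fin.lt_one_iff,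
    Matrix.cons_val_fin_one, forall_const, Std.le_refl, Fin.reduceLT, true_iff, true_and,
    lt_self_iff_false, Fin.reduceEq, one_ne_zero, and_true, not_and, not_le, and_imp]
  grind [lt_iff_not_lt]

lemma avoiderGF_eq :
    avoiderGF ({![0,3,1,2], ![1,2,3,0], ![2,0,1,3]} : Set (Fin 4 → Fin 4)) = gf avoidsTCount := by
  have hcount (n : ℕ) : avoiderCount {![0,3,1,2], ![1,2,3,0], ![2,0,1,3]} n = avoidsTCount n :=
    countPerm_congr fun _ ↦ forall_not_containsPattern_iff_avoidsT
  simp only [avoiderGF, gf, hcount]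

end PermPattern

theorem statement_2 :
    ((1 : PowerSeries ℚ) - X)^5 * (1 - 4*X + 5*X^2 - 3*X^3) * avoiderGF ({![0,3,1,2], ![1,2,3,0], ![2,0,1,3]} : Set (Fin 4 → Fin 4)) =
      (1 - 9*X + 35*X^2 - 77*X^3 + 107*X^4 - 97*X^5 + 55*X^6 - 17*X^7 + X^8) * catalanGF := by
  rw [PermPattern.avoiderGF_eq, PermPattern.gf_avoidsTCount,
    ← PermPattern.mul_one_add_X_mul_gf_ascSiteTotal]
  ring
end
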